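/- For every integer k ≥ 2, every integer m ≥ 1 and every real 0 < δ ≤ 1 there exists an integer N with the following property: if L is a finite subset of ℕ with |L| ≥ N and A is a set of words over k satisfying |A ∩ [k]^n| ≥ δ k^n for every n ∈ L, then there exist a word c over k and left variable words w_0,…,w_{m−1} over k such that the set {c} ∪ {c⌢w_0(a_0)⌢···⌢w_n(a_n) : 0 ≤ n ≤ m−1 and a_0,…,a_n ∈ [k]} is contained in A. -/

import Mathlib

/-- A word over `k`: a finite sequence with values in `[k]`. -/
abbrev Word (k : ℕ) := List (Fin k)

/-- A "possibly variable" letter sequence: `none` plays the role of the variable `v`. -/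
abbrev VWord (k : ℕ) := List (Option (Fin k))

/-- Substitution of the letter `a` for every occurrence of the variable. -/
def subst {k : ℕ} (w : VWord k) (a : Fin k) : Word k := w.map (fun o => o.getD a)

/-- `w` is a left variable word: its leftmost letter is the variable `v`. -/
def IsLeftVar {k : ℕ} (w : VWord k) : Prop := w.head? = some none

/-- The word `c ⌢ w₀(a₀) ⌢ ⋯ ⌢ wₙ(aₙ)`. -/
def csWord {k : ℕ} (c : Word k) (ws : ℕ → VWord k) (n : ℕ) (a : ℕ → Fin k) : Word k :=
  c ++ ((List.range (n + 1)).map fun i => subst (ws i) (a i)).flatten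

/-- The set `{c} ∪ {c ⌢ w₀(a₀) ⌢ ⋯ ⌢ wₙ(aₙ) : 0 ≤ n ≤ m-1, a₀,…,aₙ ∈ [k]}`. -/
def csSet {k : ℕ} (c : Word k) (m : ℕ) (ws : ℕ → VWord k) : Set (Word k) :=
  insert c {x | ∃ n < m, ∃ a : ℕ → Fin k, x = csWord c ws n a}

/-!
The proof is a density increment by induction on the size of the alphabet. Densities are taken with
respect to a uniformly random word of a uniformly random length less than `n`. Suppose that every
positive density forces trees of every depth over `[k]`, but that the supremum `δ` of the densities
that do not force a Carlson–Simpson tree of depth two over `[k + 1]` is positive.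

* A function on the words over `[k]` that is not small on average is bounded below on a tree. Hence
  a nonnegative function `g` that does not distinguish the letter `k + 1` from some `a ≤ k`
  dominates a multiple of the image measure of a tree over `[k + 1]`. If `F` is negative on average
  over every tree, subtracting this multiple from `g` increases the correlation of `F` with `g` by a
  fixed amount, so, iterating, `F` correlates with no such `g`, nor with a product of them.

* Let `A` be a set over `[k + 1]` without trees of depth two and `x ∈ A`. The words `z` for which
  `A` contains the points `a ≤ k` of the line through `x ⌢ (k + 1) ⌢ z` are described by a product
  of such functions, while `A` misses `x ⌢ (k + 1) ⌢ z`. Since `A` has density at most about `δ`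
  on long enough trees, these `z` are rare as soon as `A` has density almost `δ` among the words
  `x ⌢ (k + 1) ⌢ z`.

* Consequently, if a random such `A` contained every short word with probability almost `δ`, then
  the words over `[k]` sent into `A` by substitution into random left variable words would, with
  high probability, contain no tree of depth two, yet have expected density almost `δ`,
  contradicting the induction hypothesis. But a set of density slightly below `δ` without trees of
  depth two has such random copies, obtained by planting the letters of short words at random
  positions.

From depth two to arbitrary depth, the shapes of the trees of depth `e` of bounded length are finite
in number, so some shape occurs at a dense set of roots, and this set contains a tree of depth two.
-/

open Finset Function
open scoped BigOperators

namespace CarlsonSimpson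

section Averages

variable {ι κ E : Type*} [AddCommMonoid E] [Module ℚ≥0 E]

theorem expect_expect [Fintype ι] [Fintype κ] (f : ι → κ → E) :
    𝔼 i, 𝔼 j, f i j = 𝔼 p : ι × κ, f p.1 p.2 := by
  rw [← univ_product_univ, expect_product']

theorem expect_update [Fintype ι] [DecidableEq ι] {β : ι → Type*} [∀ i, Fintype (β i)]
    [∀ i, Nonempty (β i)] (j : ι) (f : (∀ i, β i) → E) :
    𝔼 S, 𝔼 q, f (update S j q) = 𝔼 S, f S := by
  let swap : (∀ i, β i) × β j → (∀ i, β i) × β j := fun p => (update p.1 j p.2, p.1 j)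
  have hswap : Involutive swap := fun p => by simp [swap]
  calc 𝔼 S, 𝔼 q, f (update S j q)
      = 𝔼 p : (∀ i, β i) × β j, f (swap p).1 := expect_expect _
    _ = 𝔼 p : (∀ i, β i) × β j, f p.1 :=
      Fintype.expect_bijective swap hswap.bijective _ _ fun _ => rfl
    _ = 𝔼 S, f S := by simp [← expect_expect fun (S : ∀ i, β i) (_ : β j) => f S]

theorem expect_eval [Fintype ι] [DecidableEq ι] {β : ι → Type*} [∀ i, Fintype (β i)]
    [∀ i, Nonempty (β i)] (j : ι) (f : β j → E) :
    𝔼 S : ∀ i, β i, f (S j) = 𝔼 q, f q := by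
  simp [← expect_update j fun S => f (S j)]

end Averages

/-! ### Carlson–Simpson maps -/

section CSMaps

variable {k : ℕ}

/-- The word `w₀(x₀) ⌢ w₁(x₁) ⌢ ⋯` obtained by substituting the letters of `x` in turn. -/
def substSeq (w : ℕ → VWord k) (x : Word k) : Word k :=
  (x.mapIdx fun i a => subst (w i) a).flatten

/-- The analogue of `substSeq` for a word `v` that may contain the variable: an occurrence of the
variable in `v` leaves the corresponding `wᵢ` unchanged. -/
def substSeqVar (w : ℕ → VWord k) (v : VWord k) : VWord k :=
  (v.mapIdx fun i o => (w i).map (·.or o)).flatten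

theorem substSeq_nil (w : ℕ → VWord k) : substSeq w [] = [] := rfl

theorem substSeq_congr {w w' : ℕ → VWord k} {x : Word k} (h : ∀ i < x.length, w i = w' i) :
    substSeq w x = substSeq w' x :=
  congrArg List.flatten (List.mapIdx_eq_mapIdx_iff.2 fun i hi => by rw [h i hi])

theorem substSeq_append (w : ℕ → VWord k) (x y : Word k) :
    substSeq w (x ++ y) = substSeq w x ++ substSeq (fun i => w (i + x.length)) y := by
  simp only [substSeq, List.mapIdx_append, List.flatten_append]

theorem substSeq_concat (w : ℕ → VWord k) (x : Word k) (a : Fin k) :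
    substSeq w (x ++ [a]) = substSeq w x ++ subst (w x.length) a := by
  simp [substSeq]

theorem subst_substSeqVar (w : ℕ → VWord k) (v : VWord k) (a : Fin k) :
    subst (substSeqVar w v) a = substSeq w (subst v a) := by
  induction v generalizing w with
  | nil => rfl
  | cons o v ih =>
    have hor (l : Option (Fin k)) : (l.or o).getD a = l.getD (o.getD a) := by cases l <;> rfl
    have ih := ih fun i => w (i + 1)
    simp only [subst, substSeqVar, substSeq] at ih
    simp [subst, substSeqVar, substSeq, List.mapIdx_cons, ih, hor]

theorem isLeftVar_substSeqVar {w : ℕ → VWord k} {v : VWord k} (hw : IsLeftVar (w 0))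
    (hv : IsLeftVar v) : IsLeftVar (substSeqVar w v) := by
  obtain ⟨v', rfl⟩ : ∃ v', v = none :: v' := List.head?_eq_some_iff.1 hv
  obtain ⟨w', hw'⟩ : ∃ w', w 0 = none :: w' := List.head?_eq_some_iff.1 hw
  simp [IsLeftVar, substSeqVar, List.mapIdx_cons, hw']

theorem substSeq_var (x : Word k) : substSeq (fun _ => [none]) x = x := by
  induction x using List.reverseRecOn with
  | nil => rfl
  | append_singleton x a ih => simp [substSeq_concat, ih, subst]

theorem length_subst (w : VWord k) (a : Fin k) : (subst w a).length = w.length :=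
  List.length_map _

theorem length_substSeq (w : ℕ → VWord k) (x : Word k) :
    (substSeq w x).length = ∑ i ∈ range x.length, (w i).length := by
  induction x using List.reverseRecOn with
  | nil => rfl
  | append_singleton x a ih => simp [substSeq_concat, ih, length_subst, sum_range_succ]

theorem substSeq_substSeq (w w' : ℕ → VWord k) (x : Word k) :
    substSeq w (substSeq w' x) =
      substSeq (fun n => substSeqVar (fun i => w (i + ∑ j ∈ range n, (w' j).length)) (w' n)) x := by
  induction x using List.reverseRecOn with
  | nil => rfl
  | append_singleton x a ih =>
    rw [substSeq_concat, substSeq_append, substSeq_concat, ih, subst_substSeqVar, length_substSeq]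

/-- A Carlson–Simpson map: an infinite Carlson–Simpson tree, regarded as the map sending
`x₀⋯xₙ₋₁` to `c ⌢ w₀(x₀) ⌢ ⋯ ⌢ wₙ₋₁(xₙ₋₁)`. -/
def IsCSMap (Φ : Word k → Word k) : Prop :=
  ∃ c w, (∀ n, IsLeftVar (w n)) ∧ ∀ x, Φ x = c ++ substSeq w x

theorem IsCSMap.comp {Φ Ψ : Word k → Word k} (hΦ : IsCSMap Φ) (hΨ : IsCSMap Ψ) :
    IsCSMap fun x => Φ (Ψ x) := by
  obtain ⟨c, w, hw, hΦ⟩ := hΦ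
  obtain ⟨c', w', hw', hΨ⟩ := hΨ
  have hcomp (x : Word k) : Φ (Ψ x) =
      (c ++ substSeq w c') ++ substSeq (fun i => w (i + c'.length)) (substSeq w' x) := by
    rw [hΦ, hΨ, substSeq_append, List.append_assoc]
  simp only [substSeq_substSeq] at hcomp
  refine ⟨_, _, fun n => ?_, hcomp⟩
  exact isLeftVar_substSeqVar (hw _) (hw' n)

theorem isCSMap_append_left (p : Word k) : IsCSMap (p ++ ·) :=
  ⟨p, fun _ => [none], fun _ => rfl, fun x => by rw [substSeq_var]⟩

theorem isCSMap_id : IsCSMap fun x : Word k => x :=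
  isCSMap_append_left []

theorem IsCSMap.length_eq {Φ : Word k → Word k} (hΦ : IsCSMap Φ) {x y : Word k}
    (h : x.length = y.length) : (Φ x).length = (Φ y).length := by
  obtain ⟨c, w, -, hΦ⟩ := hΦ
  simp only [hΦ, List.length_append, length_substSeq, h]

theorem substSeq_map {k' : ℕ} (f : Fin k → Fin k') (w : ℕ → VWord k) (x : Word k) :
    substSeq (fun i => (w i).map (Option.map f)) (x.map f) = (substSeq w x).map f := by
  induction x using List.reverseRecOn with
  | nil => rfl
  | append_singleton x a ih =>
    have hsubst (v : VWord k) : subst (v.map (Option.map f)) (f a) = (subst v a).map f := by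
      simp [subst, Option.getD_map]
    simp only [List.map_append, List.map_singleton, substSeq_concat, ih, hsubst, List.length_map]

theorem IsCSMap.exists_map {k' : ℕ} (f : Fin k → Fin k') {Φ : Word k → Word k} (hΦ : IsCSMap Φ) :
    ∃ Ψ : Word k' → Word k', IsCSMap Ψ ∧ ∀ x, Ψ (x.map f) = (Φ x).map f := by
  obtain ⟨c, w, hw, hΦ⟩ := hΦ
  refine ⟨_, ⟨c.map f, fun i => (w i).map (Option.map f), fun n => ?_, fun _ => rfl⟩, fun x => ?_⟩
  · simp [IsLeftVar, show (w n).head? = some none from hw n]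
  · rw [substSeq_map, hΦ, List.map_append]

/-- `A` contains a Carlson–Simpson tree of depth `d`. -/
def HasCSTree (d : ℕ) (A : Set (Word k)) : Prop :=
  ∃ Φ, IsCSMap Φ ∧ ∀ x : Word k, x.length < d → Φ x ∈ A

theorem HasCSTree.of_preimage {d : ℕ} {A : Set (Word k)} {Φ : Word k → Word k} (hΦ : IsCSMap Φ)
    (h : HasCSTree d (Φ ⁻¹' A)) : HasCSTree d A :=
  let ⟨_, hΨ, h⟩ := h
  ⟨_, hΦ.comp hΨ, h⟩

/-- `A` contains the Carlson–Simpson tree of depth two with root `x` whose only level word is the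
left variable word with tail `v`. -/
def HasLine (A : Set (Word k)) (x : Word k) (v : VWord k) : Prop :=
  x ∈ A ∧ ∀ a, x ++ a :: subst v a ∈ A

theorem hasCSTree_two_iff {A : Set (Word k)} : HasCSTree 2 A ↔ ∃ x v, HasLine A x v := by
  constructor
  · rintro ⟨Φ, ⟨c, w, hw, hΦ⟩, h⟩
    obtain ⟨v, hv⟩ : ∃ v, w 0 = none :: v := List.head?_eq_some_iff.1 (hw 0)
    refine ⟨c, v, ?_, fun a => ?_⟩
    · simpa [hΦ, substSeq] using h [] (by simp)
    · simpa [hΦ, substSeq, hv, subst] using h [a] (by simp)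
  · rintro ⟨x, v, hx, hv⟩
    refine ⟨_, ⟨x, fun _ => none :: v, fun _ => rfl, fun _ => rfl⟩, fun l hl => ?_⟩
    match l, hl with
    | [], _ => simpa [substSeq] using hx
    | [a], _ => simpa [substSeq, subst] using hv a

end CSMaps

/-! ### Truncation and planting -/

section Truncation

variable {α β : Type*} {n : ℕ}

/-- The word formed by the first `t` values of the finite sequence `z`. -/
def trunc (z : Fin n → α) (t : ℕ) : List α := (List.ofFn z).take t

theorem length_trunc (z : Fin n → α) (t : Fin n) : (trunc z t).length = t := by
  simp [trunc, t.2.le]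

theorem trunc_congr {z z' : Fin n → α} {t : Fin n} :
    trunc z t = trunc z' t ↔ ∀ p < t, z p = z' p := by
  simp only [trunc, List.ext_getElem_iff, List.length_take, List.length_ofFn, true_and,
    List.getElem_take, List.getElem_ofFn, lt_min_iff]
  exact ⟨fun h p hp => h p ⟨hp, p.2⟩ ⟨hp, p.2⟩, fun h p hp _ => h ⟨p, hp.2⟩ hp.1⟩

theorem trunc_map (f : α → β) (z : Fin n → α) (t : ℕ) : trunc (f ∘ z) t = (trunc z t).map f := by
  rw [trunc, trunc, List.map_take, List.map_ofFn]

theorem trunc_succ (z : Fin n → α) (t : Fin n) : trunc z (t + 1) = trunc z t ++ [z t] := by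
  simp [trunc, List.take_add_one]

theorem trunc_eq_append (z : Fin n → α) {s t : Fin n} (h : s < t) :
    trunc z t = trunc z s ++ z s :: (trunc z t).drop (s + 1) := by
  have hs : (trunc z t).take (s + 1) = trunc z (s + 1) := by
    rw [trunc, List.take_take, min_eq_left (Nat.succ_le_of_lt h), trunc]
  conv_lhs => rw [← List.take_append_drop (s + 1) (trunc z t), hs, trunc_succ]
  simp

theorem drop_trunc_congr {z z' : Fin n → α} {s : ℕ} {t : Fin n}
    (h : ∀ p : Fin n, s ≤ p → p < t → z p = z' p) :
    (trunc z t).drop s = (trunc z' t).drop s := by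
  refine List.ext_getElem (by simp [trunc]) fun i hi _ => ?_
  simp only [trunc, List.getElem_drop, List.getElem_take, List.getElem_ofFn]
  simp only [List.length_drop, length_trunc] at hi
  exact h _ (Nat.le_add_right _ _) (Fin.lt_def.2 (by simp only; lia))

theorem exists_trunc_eq [Nonempty α] (l : List α) (h : l.length ≤ n) :
    ∃ z : Fin n → α, trunc z l.length = l := by
  inhabit α
  refine ⟨fun i => l.getD i default, List.ext_getElem (by simp [trunc, h]) fun i _ hi => ?_⟩
  simp [trunc, hi]

theorem exists_eq_trunc [Zero β] (g : Fin n → (Fin n → α) → β)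
    (hg : ∀ t z z', (∀ p < t, z p = z' p) → g t z = g t z') :
    ∃ f : List α → β, (∀ (t : Fin n) z, f (trunc z t) = g t z) ∧ ∀ l, n ≤ l.length → f l = 0 := by
  have hfactor : FactorsThrough (fun q : Fin n × (Fin n → α) => g q.1 q.2)
      fun q => trunc q.2 q.1 := by
    rintro ⟨t, z⟩ ⟨t', z'⟩ h
    obtain rfl : t = t' := Fin.ext (by simpa only [length_trunc] using congrArg List.length h)
    exact hg t z z' (trunc_congr.1 h)
  refine ⟨extend _ _ 0, fun t z => hfactor.extend_apply 0 (t, z), fun l hl => ?_⟩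
  refine extend_apply' _ _ _ ?_
  rintro ⟨⟨t, z⟩, rfl⟩
  exact (hl.trans_eq (length_trunc z t)).not_gt t.2

end Truncation

section Planting

variable {B P α β E : Type*}

/-- The family `y` with the value at `σ b` replaced by `x b` for every `b ∈ s`. -/
noncomputable def plantOn (σ : B → P) (s : Set B) (x : B → α) (y : P → α) : P → α :=
  extend (s.domRestrict σ) (s.domRestrict x) y

theorem plantOn_of_mem {σ : B → P} (hσ : Injective σ) {s : Set B} (x : B → α) (y : P → α) {b : B}
    (hb : b ∈ s) : plantOn σ s x y (σ b) = x b :=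
  (hσ.injOn.injective.extend_apply (s.domRestrict x) y ⟨b, hb⟩ :)

theorem plantOn_of_notMem {σ : B → P} {s : Set B} (x : B → α) (y : P → α) {p : P}
    (hp : ∀ b ∈ s, σ b ≠ p) : plantOn σ s x y p = y p :=
  extend_apply' _ _ _ fun ⟨⟨b, hb⟩, h⟩ => hp b hb h

theorem comp_plantOn (f : α → β) (σ : B → P) (s : Set B) (x : B → α) (y : P → α) :
    f ∘ plantOn σ s x y = plantOn σ s (f ∘ x) (f ∘ y) :=
  funext <| apply_extend f (s.domRestrict σ) y

theorem plantOn_congr {σ σ' : B → P} {s : Set B} (h : Set.EqOn σ σ' s) :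
    plantOn (α := α) σ s = plantOn σ' s := by
  unfold plantOn
  rw [Set.domRestrict_eq_domRestrict_iff.2 h]

theorem plantOn_empty (σ : B → P) (x : B → α) (y : P → α) : plantOn σ ∅ x y = y :=
  funext fun _ => plantOn_of_notMem x y fun _ hb => hb.elim

theorem plantOn_comp_self {σ : B → P} (hσ : Injective σ) (s : Set B) (y : P → α) :
    plantOn σ s (y ∘ σ) y = y := by
  funext p
  by_cases hp : ∃ b ∈ s, σ b = p
  · obtain ⟨b, hb, rfl⟩ := hp
    exact plantOn_of_mem hσ _ _ hb
  · push Not at hp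
    exact plantOn_of_notMem _ _ hp

theorem plantOn_update [DecidableEq P] {σ : B → P} (hσ : Injective σ) (s : Set B)
    (x : B → α) (y : P → α) (b : B) :
    plantOn σ s x (update y (σ b) (x b)) = plantOn σ (insert b s) x y := by
  funext p
  by_cases hp : ∃ c ∈ insert b s, σ c = p
  · obtain ⟨c, hc, rfl⟩ := hp
    rw [plantOn_of_mem hσ x y hc]
    by_cases hcs : c ∈ s
    · rw [plantOn_of_mem hσ _ _ hcs]
    · obtain rfl := hc.resolve_right hcs
      rw [plantOn_of_notMem _ _ fun d hd h => hcs ((hσ h : d = c) ▸ hd), update_self]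
  · push Not at hp
    rw [plantOn_of_notMem _ _ hp, plantOn_of_notMem _ _ fun c hc => hp c (.inr hc),
      update_of_ne (hp b (.inl rfl)).symm]

theorem expect_plantOn [AddCommMonoid E] [Module ℚ≥0 E] [Fintype B] [Fintype P] [Fintype α]
    [DecidableEq B] [DecidableEq P] [Nonempty α] {σ : B → P} (hσ : Injective σ) (s : Set B)
    (f : (P → α) → E) : 𝔼 y, 𝔼 x : B → α, f (plantOn σ s x y) = 𝔼 z, f z := by
  classical
  let swap : (P → α) × (B → α) → (P → α) × (B → α) := fun q =>
    (plantOn σ s q.2 q.1, s.piecewise (q.1 ∘ σ) q.2)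
  have hswap : Involutive swap := by
    rintro ⟨y, x⟩
    refine Prod.ext (funext fun p => ?_) (funext fun b => ?_)
    · by_cases hp : ∃ b ∈ s, σ b = p
      · obtain ⟨b, hb, rfl⟩ := hp
        simp only [swap, plantOn_of_mem hσ _ _ hb, Set.piecewise_eq_of_mem _ _ _ hb, comp_apply]
      · push Not at hp
        simp only [swap, plantOn_of_notMem _ _ hp]
    · by_cases hb : b ∈ s
      · simp only [swap, Set.piecewise_eq_of_mem _ _ _ hb, comp_apply, plantOn_of_mem hσ _ _ hb]
      · simp only [swap, Set.piecewise_eq_of_notMem _ _ _ hb]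
  calc 𝔼 y, 𝔼 x : B → α, f (plantOn σ s x y)
      = 𝔼 q : (P → α) × (B → α), f (swap q).1 := expect_expect _
    _ = 𝔼 q : (P → α) × (B → α), f q.1 :=
      Fintype.expect_bijective swap hswap.bijective _ _ fun _ => rfl
    _ = 𝔼 z, f z := by simp [← expect_expect fun (y : P → α) (_ : B → α) => f y]

end Planting

section PositionMap

variable {k n N : ℕ}

/-- The Carlson–Simpson map that plants the letters of its argument at the positions `σ 0, σ 1, …`
of `y`; beyond `σ (n - 1)` its letters are irrelevant. -/
def positionMap (σ : Fin n → Fin N) (y : Fin N → Fin k) (x : Word k) : Word k :=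
  let pos (j : ℕ) : ℕ := if h : j < n then σ ⟨j, h⟩ else N
  trunc y (pos 0) ++
    substSeq (fun j => none :: ((trunc y (pos (j + 1))).drop (pos j + 1)).map some) x

theorem isCSMap_positionMap (σ : Fin n → Fin N) (y : Fin N → Fin k) :
    IsCSMap (positionMap σ y) :=
  ⟨_, fun _ => none :: _, fun _ => rfl, fun _ => rfl⟩

theorem positionMap_trunc {σ : Fin n → Fin N} (hσ : StrictMono σ) (x : Fin n → Fin k)
    (y : Fin N → Fin k) {t : Fin n} {s : Set (Fin n)} (hs : Set.Iio t ⊆ s) :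
    positionMap σ y (trunc x t) = trunc (plantOn σ s x y) (σ t) := by
  obtain ⟨j, hj⟩ := t
  induction j with
  | zero =>
    have hy : trunc y (σ ⟨0, hj⟩) = trunc (plantOn σ s x y) (σ ⟨0, hj⟩) :=
      trunc_congr.2 fun p hp => (plantOn_of_notMem _ _ fun b _ hb =>
        (Nat.not_lt_zero _ (hσ.lt_iff_lt.1 (hb ▸ hp))).elim).symm
    simpa [positionMap, hj, trunc, substSeq] using hy
  | succ j ih =>
    have hj' : j < n := by lia
    have hjlt : (⟨j, hj'⟩ : Fin n) < ⟨j + 1, hj⟩ := by simp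
    have hgap : (trunc y (σ ⟨j + 1, hj⟩)).drop (σ ⟨j, hj'⟩ + 1) =
        (trunc (plantOn σ s x y) (σ ⟨j + 1, hj⟩)).drop (σ ⟨j, hj'⟩ + 1) := by
      refine drop_trunc_congr fun p hp hp' => (plantOn_of_notMem _ _ fun b _ hb => ?_).symm
      have h1 : ⟨j, hj'⟩ < b := hσ.lt_iff_lt.1 (hb ▸ Fin.lt_def.2 hp)
      have h2 : b < ⟨j + 1, hj⟩ := hσ.lt_iff_lt.1 (hb ▸ hp')
      simp only [Fin.lt_def] at h1 h2
      lia
    specialize ih hj' fun b hb => hs (hb.trans hjlt)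
    have hx : trunc x (j + 1) = trunc x j ++ [x ⟨j, hj'⟩] := trunc_succ x ⟨j, hj'⟩
    have hlen : (trunc x j).length = j := length_trunc x ⟨j, hj'⟩
    rw [trunc_eq_append _ (hσ hjlt), ← hgap, ← ih, plantOn_of_mem hσ.injective _ _ (hs hjlt)]
    simp [positionMap, hx, substSeq_concat, hlen, hj, hj', subst]

end PositionMap

/-! ### Averages over words -/

section Indicator

variable {α : Type*} (A : Set α)

/-- The real-valued indicator function of a set. -/
noncomputable def ind : α → ℝ := A.indicator 1

variable {A}

theorem ind_nonneg (x : α) : 0 ≤ ind A x := Set.indicator_nonneg (fun _ _ => zero_le_one) x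

theorem ind_le_one (x : α) : ind A x ≤ 1 := Set.indicator_le_self' (fun _ _ => zero_le_one) x

theorem ind_of_mem {x : α} (h : x ∈ A) : ind A x = 1 := Set.indicator_of_mem h _

theorem ind_of_notMem {x : α} (h : x ∉ A) : ind A x = 0 := Set.indicator_of_notMem h _

theorem expect_mul_ind_singleton [Fintype α] (f : α → ℝ) (c : α) :
    𝔼 a, f a * ind {c} a = f c / Fintype.card α := by
  have hne (a : α) (ha : a ≠ c) : f a * ind {c} a = 0 := by
    rw [ind_of_notMem (Set.mem_singleton_iff.not.2 ha), mul_zero]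
  rw [Fintype.expect_eq_sum_div_card, Fintype.sum_eq_single c hne, ind_of_mem (Set.mem_singleton c),
    mul_one]

end Indicator

section WordAverages

variable {α : Type*} [Fintype α] {n : ℕ} {f g : List α → ℝ}

/-- The average of `f` over the words of length `t`. -/
noncomputable def levelAvg (t : ℕ) (f : List α → ℝ) : ℝ := 𝔼 x : Fin t → α, f (List.ofFn x)

/-- The average of `f` over the words of length less than `n`, each length having weight `1 / n`. -/
noncomputable def wordAvg (n : ℕ) (f : List α → ℝ) : ℝ := 𝔼 t : Fin n, levelAvg t f

theorem expect_fin_add (s t : ℕ) (f : (Fin (s + t) → α) → ℝ) :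
    𝔼 z, f z = 𝔼 x : Fin s → α, 𝔼 y : Fin t → α, f (Fin.append x y) := by
  rw [expect_expect]
  exact (Fintype.expect_equiv (Fin.appendEquiv s t) _ _ fun _ => rfl).symm

theorem levelAvg_add (s t : ℕ) (f : List α → ℝ) :
    levelAvg (s + t) f = levelAvg s fun x => levelAvg t fun y => f (x ++ y) := by
  simp only [levelAvg, expect_fin_add, List.ofFn_fin_append]

theorem expect_trunc [Nonempty α] {t : ℕ} (ht : t ≤ n) (f : List α → ℝ) :
    𝔼 z : Fin n → α, f (trunc z t) = levelAvg t f := by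
  obtain ⟨s, rfl⟩ := Nat.exists_eq_add_of_le ht
  have htrunc (x : Fin t → α) (y : Fin s → α) : trunc (Fin.append x y) t = List.ofFn x := by
    rw [trunc, List.ofFn_fin_append, List.take_left' (List.length_ofFn)]
  simp only [expect_fin_add, htrunc, Fintype.expect_const, levelAvg]

theorem wordAvg_eq_expect_trunc [Nonempty α] (n : ℕ) (f : List α → ℝ) :
    wordAvg n f = 𝔼 t : Fin n, 𝔼 z : Fin n → α, f (trunc z t) := by
  simp only [wordAvg, expect_trunc (Fin.is_le' : (_ : Fin n) ≤ n)]

theorem wordAvg_mono (h : ∀ l, l.length < n → f l ≤ g l) : wordAvg n f ≤ wordAvg n g :=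
  expect_le_expect fun t _ => expect_le_expect fun x _ => h _ (by simp)

theorem wordAvg_congr (h : ∀ l, l.length < n → f l = g l) : wordAvg n f = wordAvg n g :=
  (wordAvg_mono fun l hl => (h l hl).le).antisymm (wordAvg_mono fun l hl => (h l hl).ge)

theorem wordAvg_const [Nonempty α] [NeZero n] (c : ℝ) : wordAvg n (fun _ : List α => c) = c := by
  simp [wordAvg, levelAvg]

theorem wordAvg_nonneg (h : ∀ l, 0 ≤ f l) : 0 ≤ wordAvg n f :=
  expect_nonneg fun _ _ => expect_nonneg fun _ _ => h _

theorem wordAvg_le_one [Nonempty α] [NeZero n] (h : ∀ l, f l ≤ 1) : wordAvg n f ≤ 1 :=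
  (wordAvg_mono fun l _ => h l).trans_eq (wordAvg_const 1)

theorem wordAvg_add : wordAvg n (fun l => f l + g l) = wordAvg n f + wordAvg n g := by
  simp only [wordAvg, levelAvg, expect_add_distrib]

theorem wordAvg_sub : wordAvg n (fun l => f l - g l) = wordAvg n f - wordAvg n g := by
  simp only [wordAvg, levelAvg, expect_sub_distrib]

theorem wordAvg_const_mul (c : ℝ) : wordAvg n (fun l => c * f l) = c * wordAvg n f := by
  simp only [wordAvg, levelAvg, mul_expect]

theorem wordAvg_expect {ι : Type*} (s : Finset ι) (f : ι → List α → ℝ) :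
    wordAvg n (fun l => 𝔼 i ∈ s, f i l) = 𝔼 i ∈ s, wordAvg n (f i) := by
  simp only [wordAvg, levelAvg, expect_comm s]

theorem wordAvg_sum {ι : Type*} (s : Finset ι) (f : ι → List α → ℝ) :
    wordAvg n (fun l => ∑ i ∈ s, f i l) = ∑ i ∈ s, wordAvg n (f i) := by
  simp only [wordAvg, levelAvg, expect_sum_comm]

theorem levelAvg_ind {α : Type*} [Fintype α] (n : ℕ) (A : Set (List α)) :
    levelAvg n (ind A) = {x ∈ A | x.length = n}.ncard / (Fintype.card α : ℝ) ^ n := by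
  classical
  have himage : {x ∈ A | x.length = n} = List.ofFn '' {x : Fin n → α | List.ofFn x ∈ A} := by
    ext l
    constructor
    · rintro ⟨hl, rfl⟩
      exact ⟨l.get, by simpa using hl, by simp⟩
    · rintro ⟨x, hx, rfl⟩
      exact ⟨hx, List.length_ofFn⟩
  rw [himage, Set.ncard_image_of_injective _ List.ofFn_injective, Set.ncard_eq_toFinset_card',
    Set.toFinset_ofPred, ← sum_boole, levelAvg, Fintype.expect_eq_sum_div_card]
  simp [ind, Set.indicator_apply]

theorem levelAvg_mul_ind_singleton (t : ℕ) (f : List α → ℝ) (l : List α) :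
    levelAvg t (fun x => f x * ind {l} x) =
      if t = l.length then f l / (Fintype.card α : ℝ) ^ t else 0 := by
  split_ifs with ht
  · subst ht
    have hind (x : Fin l.length → α) : ind {l} (.ofFn x) = ind {l.get} x := by
      refine Set.indicator_eq_indicator ?_ rfl
      rw [Set.mem_singleton_iff, Set.mem_singleton_iff, ← List.ofFn_injective.eq_iff, List.ofFn_get]
    simp only [levelAvg, hind, expect_mul_ind_singleton fun x => f (.ofFn x), List.ofFn_get,
      Fintype.card_fun, Fintype.card_fin, Nat.cast_pow]
  · have hne (x : Fin t → α) : f (.ofFn x) * ind {l} (.ofFn x) = 0 := by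
      rw [ind_of_notMem fun h => ht (by simpa using congrArg List.length h), mul_zero]
    simp only [levelAvg, hne, expect_const_zero]

theorem wordAvg_mul_ind_singleton (f : List α → ℝ) {l : List α} (hl : l.length < n) :
    wordAvg n (fun x => f x * ind {l} x) = f l / (n * (Fintype.card α : ℝ) ^ l.length) := by
  simp only [wordAvg, levelAvg_mul_ind_singleton]
  have hne (t : Fin n) (ht : t ≠ ⟨l.length, hl⟩) : (t : ℕ) ≠ l.length := fun h => ht (Fin.ext h)
  rw [expect_eq_sum_div_card, Fintype.sum_eq_single ⟨l.length, hl⟩ fun t ht => if_neg (hne t ht)]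
  simp [div_div, mul_comm]

theorem levelAvg_append_right_le (hf : ∀ l, 0 ≤ f l) (t : ℕ) (s : List α) :
    levelAvg t (fun x => f (x ++ s)) ≤
      (Fintype.card α : ℝ) ^ s.length * levelAvg (t + s.length) f := by
  rw [levelAvg_add, levelAvg, levelAvg, mul_expect]
  refine expect_le_expect fun x _ => ?_
  have hsum : (Fintype.card α : ℝ) ^ s.length * levelAvg s.length (fun y => f (.ofFn x ++ y)) =
      ∑ y : Fin s.length → α, f (.ofFn x ++ .ofFn y) := by
    rw [levelAvg, ← Fintype.card_mul_expect]
    simp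
  rw [hsum]
  simpa using single_le_sum (f := fun y : Fin s.length → α => f (.ofFn x ++ .ofFn y))
    (fun y _ => hf _) (mem_univ s.get)

theorem wordAvg_append_right_le (hf : ∀ l, 0 ≤ f l) {s : List α} (hs : s.length ≤ n) :
    wordAvg n (fun x => f (x ++ s)) ≤
      2 * (Fintype.card α : ℝ) ^ s.length * wordAvg (2 * n) f := by
  have hnonneg (t : ℕ) : 0 ≤ levelAvg t f := expect_nonneg fun _ _ => hf _
  have hshift : ∑ t : Fin n, levelAvg (t + s.length) f ≤ ∑ t : Fin (2 * n), levelAvg t f := by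
    rw [Fin.sum_univ_eq_sum_range fun t => levelAvg (t + s.length) f,
      Fin.sum_univ_eq_sum_range fun t => levelAvg t f, range_eq_Ico,
      sum_Ico_add' fun t => levelAvg t f]
    refine sum_le_sum_of_subset_of_nonneg (fun i hi => ?_) fun i _ _ => hnonneg i
    simp only [mem_Ico, mem_range] at hi ⊢
    lia
  calc wordAvg n (fun x => f (x ++ s))
      ≤ 𝔼 t : Fin n, (Fintype.card α : ℝ) ^ s.length * levelAvg (t + s.length) f :=
        expect_le_expect fun t _ => levelAvg_append_right_le hf t s
    _ = (Fintype.card α : ℝ) ^ s.length * ((∑ t : Fin n, levelAvg (t + s.length) f) / n) := by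
        rw [← mul_expect, Fintype.expect_eq_sum_div_card, Fintype.card_fin]
    _ ≤ (Fintype.card α : ℝ) ^ s.length * ((∑ t : Fin (2 * n), levelAvg t f) / n) := by gcongr
    _ = 2 * (Fintype.card α : ℝ) ^ s.length * wordAvg (2 * n) f := by
        rw [wordAvg, Fintype.expect_eq_sum_div_card, Fintype.card_fin]
        push_cast
        field_simp

end WordAverages

section Blocks

variable {m n : ℕ}

/-- The `q`-th position of the `b`-th block, when `Fin (m * n)` is cut into `m` intervals of
length `n`. -/
def blockPos (b : Fin m) (q : Fin n) : Fin (m * n) := finProdFinEquiv (b, q)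

theorem coe_blockPos (b : Fin m) (q : Fin n) : (blockPos b q : ℕ) = n * b + q := add_comm _ _

theorem blockPos_inj {b b' : Fin m} {q q' : Fin n} :
    blockPos b q = blockPos b' q' ↔ b = b' ∧ q = q' :=
  finProdFinEquiv.injective.eq_iff.trans Prod.mk_inj

theorem blockPos_lt_of_lt {b b' : Fin m} (h : b < b') (q q' : Fin n) :
    blockPos b q < blockPos b' q' := by
  have hmul : n * (b + 1) ≤ n * b' := Nat.mul_le_mul_left n h
  rw [Fin.lt_def, coe_blockPos, coe_blockPos]
  lia

theorem strictMono_blockPos (b : Fin m) : StrictMono (blockPos b : Fin n → Fin (m * n)) :=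
  fun q q' h => by
    rw [Fin.lt_def, coe_blockPos, coe_blockPos]
    exact Nat.add_lt_add_left h _

theorem expect_fin_mul (f : Fin (m * n) → ℝ) : 𝔼 t, f t = 𝔼 b, 𝔼 q, f (blockPos b q) := by
  rw [expect_expect]
  exact (Fintype.expect_equiv finProdFinEquiv _ _ fun _ => rfl).symm

theorem wordAvg_mul {α : Type*} [Fintype α] (f : List α → ℝ) :
    wordAvg (m * n) f = 𝔼 b : Fin m, levelAvg (n * b) fun x => wordAvg n fun l => f (x ++ l) := by
  simp only [wordAvg, expect_fin_mul, coe_blockPos, levelAvg_add]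
  exact expect_congr rfl fun b _ => expect_comm _ _ _

theorem wordAvg_mul_mono {α : Type*} [Fintype α] {f g : List α → ℝ}
    (h : ∀ x, wordAvg n (fun l => f (x ++ l)) ≤ wordAvg n fun l => g (x ++ l)) :
    wordAvg (m * n) f ≤ wordAvg (m * n) g := by
  rw [wordAvg_mul, wordAvg_mul]
  exact expect_le_expect fun b _ => expect_le_expect fun x _ => h _

end Blocks

section CSMapAverages

variable {k n N : ℕ} [NeZero k] {f : Word k → ℝ}

theorem expect_levelAvg_apply {σ : Fin n → Fin N} (hσ : StrictMono σ) (f : Word k → ℝ) :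
    𝔼 q, levelAvg (σ q) f = 𝔼 y, wordAvg n fun x => f (positionMap σ y x) := by
  simp only [wordAvg_eq_expect_trunc, positionMap_trunc hσ _ _ (Set.subset_univ _)]
  rw [expect_comm]
  refine expect_congr rfl fun q _ => ?_
  rw [expect_plantOn hσ.injective _ fun z => f (trunc z (σ q)), expect_trunc (σ q).2.le]

theorem expect_levelAvg_apply_le {σ : Fin n → Fin N} (hσ : StrictMono σ) {s : ℝ}
    (h : ∀ Φ, IsCSMap Φ → wordAvg n (fun x => f (Φ x)) ≤ s) : 𝔼 q, levelAvg (σ q) f ≤ s := by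
  rw [expect_levelAvg_apply hσ]
  exact expect_le univ_nonempty fun y _ => h _ (isCSMap_positionMap σ y)

theorem wordAvg_mul_le {r : ℕ} [NeZero r] {s : ℝ}
    (h : ∀ Φ, IsCSMap Φ → wordAvg n (fun x => f (Φ x)) ≤ s) : wordAvg (r * n) f ≤ s := by
  rw [wordAvg, expect_fin_mul]
  exact expect_le univ_nonempty fun b _ => expect_levelAvg_apply_le (strictMono_blockPos b) h

end CSMapAverages

/-! ### Planting letters at random positions -/

section RandomPlanting

variable {α P Q : Type*} [Fintype α] [Fintype P] [DecidableEq P]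

theorem expect_update_const (h : (P → α) → ℝ) (p : P) (c : α) :
    𝔼 y, h (update y p c) = 𝔼 y, Fintype.card α * ind {c} (y p) * h y := by
  have : Nonempty α := ⟨c⟩
  rw [← expect_update p fun y => Fintype.card α * ind {c} (y p) * h y]
  refine expect_congr rfl fun y _ => ?_
  calc h (update y p c)
      = 𝔼 a, Fintype.card α * h (update y p a) * ind {c} a := by
        rw [expect_mul_ind_singleton fun a => Fintype.card α * h (update y p a)]
        field_simp
    _ = 𝔼 a, Fintype.card α * ind {c} (update y p a p) * h (update y p a) := by
        simp only [update_self, mul_right_comm]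

/-- The deviation from its mean of the indicator of `y p = c`, normalised to mean `1`. -/
noncomputable def letterDev (c : α) (y : P → α) (p : P) : ℝ := 1 - Fintype.card α * ind {c} (y p)

theorem expect_letterDev_sq_le (c : α) (p : P) :
    𝔼 y, letterDev c y p ^ 2 ≤ Fintype.card α := by
  have : Nonempty α := ⟨c⟩
  have hsq (a : α) : (1 - Fintype.card α * ind {c} a) ^ 2 =
      1 + Fintype.card α * (Fintype.card α - 2) * ind {c} a := by
    by_cases h : a ∈ ({c} : Set α)
    · rw [ind_of_mem h]
      ring
    · rw [ind_of_notMem h]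
      ring
  calc 𝔼 y, letterDev c y p ^ 2
      = 𝔼 a, (1 - Fintype.card α * ind {c} a) ^ 2 :=
        expect_eval (β := fun _ => α) p fun a => (1 - Fintype.card α * ind {c} a) ^ 2
    _ = Fintype.card α - 1 := by
        rw [expect_congr rfl fun a _ => hsq a, expect_add_distrib, Fintype.expect_const,
          expect_mul_ind_singleton fun _ => _]
        field_simp
        ring
    _ ≤ Fintype.card α := sub_le_self _ zero_le_one

theorem expect_letterDev_mul_letterDev (c : α) {p p' : P} (hp : p ≠ p') :
    𝔼 y, letterDev c y p * letterDev c y p' = 0 := by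
  have : Nonempty α := ⟨c⟩
  have hmean : 𝔼 a : α, (1 - Fintype.card α * ind {c} a) = 0 := by
    rw [expect_sub_distrib, Fintype.expect_const, expect_mul_ind_singleton fun _ => _]
    field_simp
    ring
  rw [← expect_update (β := fun _ => α) p]
  simp only [letterDev, update_self, update_of_ne hp.symm, ← expect_mul, hmean, zero_mul,
    expect_const_zero]

theorem expect_expect_letterDev_sq_le [Fintype Q] [Nonempty Q] {ι : Q → P} (hι : Injective ι)
    (c : α) : 𝔼 y, (𝔼 q, letterDev c y (ι q)) ^ 2 ≤ (Fintype.card α : ℝ) / Fintype.card Q := by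
  classical
  have hpair (q q' : Q) : 𝔼 y, letterDev c y (ι q) * letterDev c y (ι q') ≤
      if q = q' then (Fintype.card α : ℝ) else 0 := by
    split_ifs with h
    · simpa only [← h, ← sq] using expect_letterDev_sq_le c (ι q)
    · exact (expect_letterDev_mul_letterDev c (hι.ne h)).le
  calc 𝔼 y, (𝔼 q, letterDev c y (ι q)) ^ 2
      = 𝔼 q, 𝔼 q', 𝔼 y, letterDev c y (ι q) * letterDev c y (ι q') := by
        simp only [sq, expect_mul_expect, expect_comm (univ : Finset (P → α))]
    _ ≤ 𝔼 q, 𝔼 q', if q = q' then (Fintype.card α : ℝ) else 0 :=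
        expect_le_expect fun q _ => expect_le_expect fun q' _ => hpair q q'
    _ = (Fintype.card α : ℝ) / Fintype.card Q := by
        simp only [Fintype.expect_eq_sum_div_card, sum_ite_eq, mem_univ, if_true, sum_const,
          card_univ, nsmul_eq_mul]
        field_simp

theorem mul_le_half_add_sq_div {φ h η : ℝ} (h0 : 0 ≤ h) (h1 : h ≤ 1) (hη : 0 < η) :
    φ * h ≤ η / 2 + φ ^ 2 / (2 * η) := by
  have hsq : 0 ≤ (η - φ * h) ^ 2 + φ ^ 2 * (1 - h ^ 2) := by
    have := pow_le_one₀ (n := 2) h0 h1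
    have := sub_nonneg.2 this
    positivity
  rw [← sub_nonneg]
  calc 0 ≤ ((η - φ * h) ^ 2 + φ ^ 2 * (1 - h ^ 2)) / (2 * η) := by positivity
    _ = η / 2 + φ ^ 2 / (2 * η) - φ * h := by field_simp; ring

theorem expect_sub_le_expect_update [Fintype Q] [Nonempty Q] {ι : Q → P} (hι : Injective ι)
    (c : α) {h : (P → α) → ℝ} (h0 : ∀ y, 0 ≤ h y) (h1 : ∀ y, h y ≤ 1) {η : ℝ} (hη : 0 < η)
    (hQ : (Fintype.card α : ℝ) ≤ η ^ 2 * Fintype.card Q) :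
    𝔼 y, h y - η ≤ 𝔼 q, 𝔼 y, h (update y (ι q) c) := by
  have : Nonempty α := ⟨c⟩
  have hdev : 𝔼 q, 𝔼 y, h (update y (ι q) c) =
      𝔼 y, h y - 𝔼 y, (𝔼 q, letterDev c y (ι q)) * h y := by
    simp only [expect_update_const]
    rw [← expect_sub_distrib, expect_comm]
    refine expect_congr rfl fun y _ => ?_
    rw [← expect_mul]
    simp only [letterDev, expect_sub_distrib, Fintype.expect_const]
    ring
  have hmoment : (𝔼 y, (𝔼 q, letterDev c y (ι q)) ^ 2) / (2 * η) ≤ η / 2 := by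
    have hcard : (Fintype.card α : ℝ) / Fintype.card Q ≤ η ^ 2 := by
      rwa [div_le_iff₀ (by exact_mod_cast Fintype.card_pos)]
    rw [div_le_iff₀ (by positivity)]
    linarith [expect_expect_letterDev_sq_le hι c]
  have herror : 𝔼 y, (𝔼 q, letterDev c y (ι q)) * h y ≤ η := by
    calc 𝔼 y, (𝔼 q, letterDev c y (ι q)) * h y
        ≤ 𝔼 y, (η / 2 + (𝔼 q, letterDev c y (ι q)) ^ 2 / (2 * η)) :=
          expect_le_expect fun y _ => mul_le_half_add_sq_div (h0 y) (h1 y) hη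
      _ = η / 2 + (𝔼 y, (𝔼 q, letterDev c y (ι q)) ^ 2) / (2 * η) := by
          rw [expect_add_distrib, Fintype.expect_const, ← expect_div]
      _ ≤ η := by linarith
  linarith

variable {m n : ℕ}

/-- The `S b`-th position of the `b`-th block, as a function of `b`. -/
def selPos (S : Fin m → Fin n) (b : Fin m) : Fin (m * n) := blockPos b (S b)

theorem strictMono_selPos (S : Fin m → Fin n) : StrictMono (selPos S) :=
  fun _ _ h => blockPos_lt_of_lt h _ _

theorem expect_sub_le_expect_plantOn [NeZero n] {η : ℝ} (hη : 0 < η)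
    (hn : (Fintype.card α : ℝ) ≤ η ^ 2 * n) (x : Fin m → α) {j : Fin m}
    {h : Fin n → (Fin (m * n) → α) → ℝ} (h0 : ∀ q y, 0 ≤ h q y) (h1 : ∀ q y, h q y ≤ 1)
    {s : Finset (Fin m)} (hj : j ∉ s) :
    𝔼 q, 𝔼 y, h q y - #s * η ≤
      𝔼 S : Fin m → Fin n, 𝔼 y, h (S j) (plantOn (selPos S) s x y) := by
  induction s using Finset.induction_on with
  | empty =>
    simpa only [coe_empty, plantOn_empty, card_empty, Nat.cast_zero, zero_mul, sub_zero] using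
      (expect_eval (β := fun _ => Fin n) j fun q => 𝔼 y, h q y).ge
  | insert b s hb ih =>
    simp only [mem_insert, not_or] at hj
    have hplant (S : Fin m → Fin n) : 𝔼 y, h (S j) (plantOn (selPos S) s x y) - η ≤
        𝔼 q, 𝔼 y, h (update S b q j) (plantOn (selPos (update S b q))
          (insert b s : Finset _) x y) := by
      refine (expect_sub_le_expect_update (strictMono_blockPos b).injective (x b)
        (fun y => h0 (S j) (plantOn (selPos S) s x y)) (fun y => h1 _ _) hη
        (by simpa using hn)).trans_eq ?_
      refine expect_congr rfl fun q _ => expect_congr rfl fun y _ => ?_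
      have hsel : selPos (update S b q) b = blockPos b q := by simp [selPos]
      have heq : Set.EqOn (selPos S) (selPos (update S b q)) s := fun c hc => by
        simp [selPos, update_of_ne (ne_of_mem_of_not_mem hc hb)]
      rw [update_of_ne hj.1, plantOn_congr heq, ← hsel,
        plantOn_update (strictMono_selPos _).injective, coe_insert]
    calc 𝔼 q, 𝔼 y, h q y - #(insert b s) * η
        = 𝔼 q, 𝔼 y, h q y - #s * η - η := by
          rw [card_insert_of_notMem hb]; push_cast; ring
      _ ≤ 𝔼 S : Fin m → Fin n, 𝔼 y, h (S j) (plantOn (selPos S) s x y) - η :=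
          sub_le_sub_right (ih hj.2) η
      _ = 𝔼 S : Fin m → Fin n, (𝔼 y, h (S j) (plantOn (selPos S) s x y) - η) := by
          rw [expect_sub_distrib, Fintype.expect_const]
      _ ≤ _ := (expect_le_expect fun S _ => hplant S).trans_eq
          (expect_update (β := fun _ => Fin n) b fun S =>
            𝔼 y, h (S j) (plantOn (selPos S) (insert b s : Finset _) x y))

end RandomPlanting

section RandomTree

variable {k m n : ℕ} [NeZero k] [NeZero n]

theorem levelAvg_sub_le_expect_positionMap {η : ℝ} (hη : 0 < η) (hn : (k : ℝ) ≤ η ^ 2 * n)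
    {f : Word k → ℝ} (h0 : ∀ l, 0 ≤ f l) (h1 : ∀ l, f l ≤ 1) (x : Fin m → Fin k) (j : Fin m) :
    𝔼 q : Fin n, levelAvg (blockPos j q) f - m * η ≤
      𝔼 S : Fin m → Fin n, 𝔼 y, f (positionMap (selPos S) y (trunc x j)) := by
  have hcard : (#(Iio j) : ℝ) * η ≤ m * η := by
    gcongr
    exact_mod_cast (card_le_univ _).trans_eq (Fintype.card_fin m)
  have hplant := expect_sub_le_expect_plantOn (α := Fin k) hη (by simpa using hn) x (j := j)
    (s := Iio j) (h := fun q y => f (trunc y (blockPos j q))) (fun _ _ => h0 _) (fun _ _ => h1 _)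
    (by simp)
  simp only [expect_trunc (blockPos j _).2.le, coe_Iio] at hplant
  simp only [positionMap_trunc (strictMono_selPos _) x _ Set.Subset.rfl]
  exact (sub_le_sub_left hcard _).trans hplant

end RandomTree

/-! ### Insensitive functions -/

section Insensitive

variable {k : ℕ} {a : Fin k}

/-- The map that replaces the last letter of `[k + 1]` by `a`. -/
def mergeLast (a : Fin k) (c : Fin (k + 1)) : Fin (k + 1) :=
  if c = Fin.last k then a.castSucc else c

theorem mergeLast_castSucc (a b : Fin k) : mergeLast a b.castSucc = b.castSucc :=
  if_neg b.castSucc_ne_last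

theorem mergeLast_eq_castSucc (a : Fin k) (c : Fin (k + 1)) :
    ∃ b : Fin k, mergeLast a c = b.castSucc := by
  induction c using Fin.lastCases with
  | last => exact ⟨a, if_pos rfl⟩
  | cast b => exact ⟨b, mergeLast_castSucc a b⟩

theorem mergeLast_comp_mergeLast (a : Fin k) : mergeLast a ∘ mergeLast a = mergeLast a :=
  funext fun c => by
    obtain ⟨b, hb⟩ := mergeLast_eq_castSucc a c
    simp only [comp_apply, hb, mergeLast_castSucc]

theorem map_mergeLast_eq_map_castSucc (a : Fin k) (x : Word (k + 1)) :
    ∃ y : Word k, x.map (mergeLast a) = y.map Fin.castSucc := by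
  choose b hb using mergeLast_eq_castSucc a
  exact ⟨x.map b, by rw [List.map_map]; exact List.map_congr_left fun c _ => hb c⟩

/-- `g` does not distinguish the last letter from `a`. -/
def Insensitive (a : Fin k) (g : Word (k + 1) → ℝ) : Prop := ∀ x, g (x.map (mergeLast a)) = g x

theorem Insensitive.comp {g : Word (k + 1) → ℝ} (hg : Insensitive a g)
    {Φ : Word (k + 1) → Word (k + 1)} (hΦ : IsCSMap Φ) : Insensitive a fun x => g (Φ x) := by
  obtain ⟨Ψ, -, hΨ⟩ := hΦ.exists_map (mergeLast a)
  intro x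
  change g (Φ _) = g (Φ x)
  rw [← hg, ← hΨ, List.map_map, mergeLast_comp_mergeLast, hΨ, hg]

theorem Insensitive.apply_trunc_congr {g : Word (k + 1) → ℝ} (hg : Insensitive a g) {n : ℕ}
    {z z' : Fin n → Fin (k + 1)} (h : mergeLast a ∘ z = mergeLast a ∘ z') (t : ℕ) :
    g (trunc z t) = g (trunc z' t) := by
  rw [← hg, ← hg (trunc z' t), ← trunc_map, ← trunc_map, h]

end Insensitive

section Correlation

variable {k d m M : ℕ} {β s : ℝ}

/-- `F ≤ 1`, and the average of `F` over every Carlson–Simpson tree of depth `d` is at most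
`-β`. -/
def TreeNegative (d : ℕ) (β : ℝ) (F : Word k → ℝ) : Prop :=
  (∀ l, F l ≤ 1) ∧ ∀ Φ, IsCSMap Φ → wordAvg d (fun x => F (Φ x)) ≤ -β

theorem TreeNegative.comp {F : Word k → ℝ} (hF : TreeNegative d β F) {Φ : Word k → Word k}
    (hΦ : IsCSMap Φ) : TreeNegative d β fun x => F (Φ x) :=
  ⟨fun _ => hF.1 _, fun _ hΨ => hF.2 _ (hΦ.comp hΨ)⟩

/-- No function that is negative on average over all trees of depth `d` correlates, on the words of
length less than `M`, with a product of insensitive functions indexed by `s`. -/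
def CorrBound (s : Finset (Fin k)) (d : ℕ) (β : ℝ) (M : ℕ) (ε : ℝ) : Prop :=
  ∀ F : Word (k + 1) → ℝ, TreeNegative d β F → ∀ g : Fin k → Word (k + 1) → ℝ,
    (∀ a ∈ s, Insensitive a (g a)) → (∀ a l, 0 ≤ g a l) → (∀ a l, g a l ≤ 1) →
      wordAvg M (fun l => F l * ∏ a ∈ s, g a l) ≤ ε

theorem CorrBound.mul {t : Finset (Fin k)} (h : CorrBound t d β M s) (r : ℕ) [NeZero r] :
    CorrBound t d β (r * M) s := fun F hF g hg h0 h1 =>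
  wordAvg_mul_le (f := fun l => F l * ∏ a ∈ t, g a l) fun Φ hΦ =>
    h _ (hF.comp hΦ) (fun a l => g a (Φ l)) (fun a ha => (hg a ha).comp hΦ) (fun _ _ => h0 _ _)
      fun _ _ => h1 _ _

theorem CorrBound.wordAvg_le {a : Fin k} (h : CorrBound {a} d β M s) {F g : Word (k + 1) → ℝ}
    (hF : TreeNegative d β F) (hg : Insensitive a g) (h0 : ∀ l, 0 ≤ g l) (h1 : ∀ l, g l ≤ 1) :
    wordAvg M (fun l => F l * g l) ≤ s := by
  simpa only [prod_singleton] using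
    h F hF (fun _ => g) (fun b hb => mem_singleton.1 hb ▸ hg) (fun _ => h0) fun _ => h1

theorem exists_insensitive_of_plantOn {a : Fin k} {N : ℕ} {σ : Fin M → Fin N}
    (y : Fin N → Fin (k + 1)) {H : Fin M → (Fin N → Fin (k + 1)) → ℝ}
    (h0 : ∀ q z, 0 ≤ H q z) (h1 : ∀ q z, H q z ≤ 1)
    (hH : ∀ q z z', mergeLast a ∘ z = mergeLast a ∘ z' →
      (∀ p, (∀ b < q, σ b ≠ p) → z p = z' p) → H q z = H q z') :
    ∃ g : Word (k + 1) → ℝ, Insensitive a g ∧ (∀ l, 0 ≤ g l) ∧ (∀ l, g l ≤ 1) ∧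
      ∀ (q : Fin M) x, g (trunc x q) = H q (plantOn σ (Set.Iio q) x y) := by
  have hadapted (q : Fin M) (x x' : Fin M → Fin (k + 1)) (h : ∀ p < q, x p = x' p) :
      H q (plantOn σ (Set.Iio q) x y) = H q (plantOn σ (Set.Iio q) x' y) := by
    congr 1
    unfold plantOn
    rw [Set.domRestrict_eq_domRestrict_iff (s := Set.Iio q) |>.2 h]
  obtain ⟨g, hg, hgzero⟩ := exists_eq_trunc (fun q x => H q (plantOn σ (Set.Iio q) x y)) hadapted
  have hcases (l : Word (k + 1)) :
      M ≤ l.length ∨ ∃ (q : Fin M) (x : Fin M → Fin (k + 1)), l = trunc x q := by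
    refine (le_or_gt M l.length).imp_right fun hl => ?_
    obtain ⟨x, hx⟩ := exists_trunc_eq l hl.le
    exact ⟨⟨_, hl⟩, x, hx.symm⟩
  refine ⟨g, fun l => ?_, fun l => ?_, fun l => ?_, hg⟩ <;>
    obtain hl | ⟨q, x, rfl⟩ := hcases l
  · rw [hgzero l hl, hgzero _ (by rwa [List.length_map])]
  · rw [← trunc_map, hg, hg]
    refine hH q _ _ ?_ fun p hp => ?_
    · rw [comp_plantOn, comp_plantOn, ← comp_assoc, mergeLast_comp_mergeLast]
    · rw [plantOn_of_notMem (s := Set.Iio q) _ _ hp,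
        plantOn_of_notMem (s := Set.Iio q) _ _ hp]
  · exact (hgzero l hl).ge
  · exact (h0 _ _).trans_eq (hg q x).symm
  · exact (hgzero l hl).trans_le zero_le_one
  · exact (hg q x).trans_le (h1 _ _)

theorem CorrBound.expect_mul_le {a : Fin k} (hM : CorrBound {a} d β M s)
    {F : Word (k + 1) → ℝ} (hF : TreeNegative d β F) {N : ℕ} {σ : Fin M → Fin N}
    (hσ : StrictMono σ) {H : Fin M → (Fin N → Fin (k + 1)) → ℝ}
    (h0 : ∀ q z, 0 ≤ H q z) (h1 : ∀ q z, H q z ≤ 1)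
    (hH : ∀ q z z', mergeLast a ∘ z = mergeLast a ∘ z' →
      (∀ p, (∀ b < q, σ b ≠ p) → z p = z' p) → H q z = H q z') :
    𝔼 q, 𝔼 z, F (trunc z (σ q)) * H q z ≤ s := by
  calc 𝔼 q, 𝔼 z, F (trunc z (σ q)) * H q z
      = 𝔼 y, 𝔼 q : Fin M, 𝔼 x : Fin M → Fin (k + 1),
          F (positionMap σ y (trunc x q)) * H q (plantOn σ (Set.Iio q) x y) := by
        rw [eq_comm, expect_comm]
        refine expect_congr rfl fun q _ => ?_
        simp only [positionMap_trunc hσ _ _ Set.Subset.rfl]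
        exact expect_plantOn hσ.injective _ fun z => F (trunc z (σ q)) * H q z
    _ ≤ s := expect_le univ_nonempty fun y _ => by
        obtain ⟨g, hg, hg0, hg1, hgH⟩ := exists_insensitive_of_plantOn y h0 h1 hH
        simp only [← hgH]
        rw [← wordAvg_eq_expect_trunc M fun l => F (positionMap σ y l) * g l]
        exact hM.wordAvg_le (hF.comp (isCSMap_positionMap σ y)) hg hg0 hg1

theorem CorrBound.expect_selPos_le [NeZero M] {a : Fin k} (hM : CorrBound {a} d β M s)
    {F : Word (k + 1) → ℝ} (hF : TreeNegative d β F) (j : Fin m)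
    {G : (Fin m → Fin M) → (Fin (m * M) → Fin (k + 1)) → ℝ}
    (h0 : ∀ S z, 0 ≤ G S z) (h1 : ∀ S z, G S z ≤ 1)
    (hG : ∀ S z z', mergeLast a ∘ z = mergeLast a ∘ z' → z ∘ selPos S = z' ∘ selPos S →
      G S z = G S z') :
    𝔼 S, 𝔼 z, F (trunc z (selPos S j)) * G S z ≤ s := by
  rw [← expect_update (β := fun _ => Fin M) j]
  refine expect_le univ_nonempty fun S _ => ?_
  simp only [selPos, update_self]
  refine hM.expect_mul_le hF (strictMono_blockPos j) (fun q => h0 (update S j q))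
    (fun q => h1 (update S j q)) fun q z z' hz hz' => hG _ _ _ hz (funext fun i => hz' _ ?_)
  intro b hb h
  obtain ⟨rfl, h⟩ := blockPos_inj.1 h
  exact hb.ne (h.trans (update_self _ _ _))

end Correlation

/-! ### Weights carried by a tree -/

section TreeWeight

variable {k d m : ℕ} {β : ℝ}

theorem wordAvg_comm {α α' : Type*} [Fintype α] [Fintype α'] (n n' : ℕ)
    (f : List α → List α' → ℝ) :
    wordAvg n (fun l => wordAvg n' (f l)) = wordAvg n' fun x => wordAvg n fun l => f l x := by
  calc wordAvg n (fun l => wordAvg n' (f l))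
      = 𝔼 t : Fin n', wordAvg n fun l => levelAvg t (f l) :=
        wordAvg_expect univ fun (t : Fin n') l => levelAvg t (f l)
    _ = wordAvg n' fun x => wordAvg n fun l => f l x :=
        expect_congr rfl fun t _ => wordAvg_expect univ fun (x : Fin t → α') l => f l (.ofFn x)

/-- The density, relative to the uniform distribution on each level, of the image under `Φ` of the
distribution underlying `wordAvg d`. -/
noncomputable def imageWeight (d : ℕ) (Φ : Word k → Word k) (l : Word k) : ℝ :=
  (k : ℝ) ^ l.length * wordAvg d fun x => ind {l} (Φ x)

theorem imageWeight_nonneg (Φ : Word k → Word k) (l : Word k) : 0 ≤ imageWeight d Φ l :=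
  mul_nonneg (by positivity) (wordAvg_nonneg fun _ => ind_nonneg _)

theorem imageWeight_le_pow [NeZero k] [NeZero d] (Φ : Word k → Word k) {l : Word k}
    (hl : l.length ≤ m) : imageWeight d Φ l ≤ (k : ℝ) ^ m :=
  calc imageWeight d Φ l
      ≤ (k : ℝ) ^ l.length * 1 :=
        mul_le_mul_of_nonneg_left (wordAvg_le_one fun _ => ind_le_one _) (by positivity)
    _ ≤ (k : ℝ) ^ m := by
        rw [mul_one]
        exact pow_le_pow_right₀ (by exact_mod_cast NeZero.one_le) hl

theorem exists_eq_of_imageWeight_ne_zero {Φ : Word k → Word k} {l : Word k}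
    (h : imageWeight d Φ l ≠ 0) : ∃ x : Word k, x.length < d ∧ Φ x = l := by
  contrapose! h
  have hzero : wordAvg d (fun x => ind {l} (Φ x)) = wordAvg d fun x => 0 * ind {l} (Φ x) :=
    wordAvg_congr fun x hx => by rw [zero_mul, ind_of_notMem (A := {l}) (h x hx)]
  rw [imageWeight, hzero, wordAvg_const_mul, zero_mul, mul_zero]

theorem wordAvg_mul_imageWeight [NeZero k] {Φ : Word k → Word k}
    (hΦ : ∀ x : Word k, x.length < d → (Φ x).length < m) (F : Word k → ℝ) :
    wordAvg m (fun l => F l * imageWeight d Φ l) = (m : ℝ)⁻¹ * wordAvg d fun x => F (Φ x) := by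
  have hk : (k : ℝ) ≠ 0 := by exact_mod_cast NeZero.ne k
  have hswap (x l : Word k) : ind {l} (Φ x) = ind {Φ x} l :=
    Set.indicator_eq_indicator (by simp only [Set.mem_singleton_iff, eq_comm]) rfl
  simp only [imageWeight, ← mul_assoc, ← wordAvg_const_mul, hswap]
  rw [wordAvg_comm]
  refine wordAvg_congr fun x hx => ?_
  rw [wordAvg_mul_ind_singleton (fun l => F l * (k : ℝ) ^ l.length) (hΦ x hx), Fintype.card_fin]
  field_simp

theorem HasCSTree.exists_lift (a : Fin k) {B : Set (Word k)} (h : HasCSTree d B) :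
    ∃ Φ : Word (k + 1) → Word (k + 1), IsCSMap Φ ∧
      ∀ x : Word (k + 1), x.length < d → ∃ b ∈ B, Φ (x.map (mergeLast a)) = b.map Fin.castSucc := by
  obtain ⟨Ψ, hΨ, hB⟩ := h
  obtain ⟨Φ, hΦ, hΦΨ⟩ := hΨ.exists_map Fin.castSucc
  refine ⟨Φ, hΦ, fun x hx => ?_⟩
  obtain ⟨y, hy⟩ := map_mergeLast_eq_map_castSucc a x
  have hlen : y.length = x.length := by simpa using (congrArg List.length hy).symm
  exact ⟨Ψ y, hB y (hlen ▸ hx), by rw [hy, hΦΨ]⟩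

open Classical in
/-- A weight on the words over `[k + 1]` that is carried by some tree which merging the last letter
into `a` turns into a tree inside `B`; it is zero if `B` contains no tree. -/
noncomputable def treeWeight (a : Fin k) (d : ℕ) (B : Set (Word k)) (l : Word (k + 1)) : ℝ :=
  if h : HasCSTree d B then imageWeight d (h.exists_lift a).choose l else 0

variable {a : Fin k} {B : Set (Word k)}

theorem treeWeight_nonneg (l : Word (k + 1)) : 0 ≤ treeWeight a d B l := by
  unfold treeWeight
  split_ifs with h
  exacts [imageWeight_nonneg _ l, le_rfl]

theorem wordAvg_mul_treeWeight_le (hB : ∀ b ∈ B, b.length < m) {F : Word (k + 1) → ℝ}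
    (hF : TreeNegative d β F) :
    wordAvg m (fun l => F l * treeWeight a d B l) ≤ -(β / m) * ind {A | HasCSTree d A} B := by
  by_cases h : HasCSTree d B
  · simp only [treeWeight, dif_pos h]
    obtain ⟨hΦ, hΦB⟩ := (h.exists_lift a).choose_spec
    generalize (h.exists_lift a).choose = Φ at hΦ hΦB ⊢
    have hlen (x : Word (k + 1)) (hx : x.length < d) : (Φ x).length < m := by
      obtain ⟨b, hb, hxb⟩ := hΦB x hx
      rw [← hΦ.length_eq (List.length_map _), hxb, List.length_map]
      exact hB b hb
    rw [wordAvg_mul_imageWeight hlen, ind_of_mem (A := {A | HasCSTree d A}) h, mul_one,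
      div_eq_inv_mul, ← mul_neg]
    exact mul_le_mul_of_nonneg_left (hF.2 _ hΦ) (by positivity)
  · simp only [treeWeight, dif_neg h, ind_of_notMem (A := {A | HasCSTree d A}) h, mul_zero]
    simp [wordAvg, levelAvg]

theorem mul_treeWeight_le [NeZero d] {e : ℝ} (he : 0 ≤ e) {g : Word (k + 1) → ℝ}
    (hg : Insensitive a g) (hg0 : ∀ l, 0 ≤ g l) (hB : ∀ b ∈ B, e ≤ g (b.map Fin.castSucc))
    {l : Word (k + 1)} (hl : l.length ≤ m) :
    e / (k + 1 : ℕ) ^ m * treeWeight a d B l ≤ g l := by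
  obtain hzero | hne := eq_or_ne (treeWeight a d B l) 0
  · simpa only [hzero, mul_zero] using hg0 l
  by_cases h : HasCSTree d B
  · simp only [treeWeight, dif_pos h] at hne ⊢
    obtain ⟨hΦ, hΦB⟩ := (h.exists_lift a).choose_spec
    generalize (h.exists_lift a).choose = Φ at hΦ hΦB hne ⊢
    obtain ⟨x, hx, hxl⟩ := exists_eq_of_imageWeight_ne_zero hne
    obtain ⟨b, hb, hxb⟩ := hΦB x hx
    calc e / (k + 1 : ℕ) ^ m * imageWeight d Φ l
        ≤ e / (k + 1 : ℕ) ^ m * (k + 1 : ℕ) ^ m :=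
          mul_le_mul_of_nonneg_left (imageWeight_le_pow _ hl) (by positivity)
      _ = e := div_mul_cancel₀ _ (by positivity)
      _ ≤ g (b.map Fin.castSucc) := hB b hb
      _ = g (Φ x) := by rw [← hxb]; exact hg.comp hΦ x
      _ = g l := by rw [hxl]
  · exact absurd (dif_neg h) hne

end TreeWeight

section LargeSet

variable {k d m N : ℕ} {e : ℝ}

/-- The words of length less than `m` on which `h` is at least `e`. -/
def largeSet (m : ℕ) (e : ℝ) (h : Word k → ℝ) : Set (Word k) := {l | l.length < m ∧ e ≤ h l}

theorem wordAvg_le_add_ind_largeSet [NeZero k] [NeZero m]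
    (hm : ∀ A : Set (Word k), e ≤ wordAvg m (ind A) → HasCSTree d A) (he : 0 ≤ e) {h : Word k → ℝ}
    (h1 : ∀ l, h l ≤ 1) :
    wordAvg m h ≤ 2 * e + ind {A | HasCSTree d A} (largeSet m e h) := by
  by_cases hA : HasCSTree d (largeSet m e h)
  · rw [ind_of_mem (A := {A | HasCSTree d A}) hA]
    linarith [wordAvg_le_one (n := m) h1]
  · have hlarge (l : Word k) (hl : l.length < m) : h l ≤ e + ind (largeSet m e h) l := by
      by_cases hle : e ≤ h l
      · rw [ind_of_mem (show l ∈ largeSet m e h from ⟨hl, hle⟩)]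
        linarith [h1 l]
      · linarith [ind_nonneg (A := largeSet m e h) l]
    have havg := wordAvg_mono hlarge
    rw [wordAvg_add, wordAvg_const] at havg
    rw [ind_of_notMem (A := {A | HasCSTree d A}) hA]
    linarith [not_le.1 (mt (hm _) hA)]

theorem largeSet_positionMap_congr {a : Fin k} {g : Word (k + 1) → ℝ} (hg : Insensitive a g)
    {σ : Fin m → Fin N} (hσ : StrictMono σ) {z z' : Fin N → Fin (k + 1)}
    (h : ∀ p, (∀ b, σ b ≠ p) → mergeLast a (z p) = mergeLast a (z' p)) :
    largeSet m e (fun l => g (positionMap σ z (l.map Fin.castSucc))) =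
      largeSet m e fun l => g (positionMap σ z' (l.map Fin.castSucc)) := by
  have : Nonempty (Fin k) := ⟨a⟩
  refine Set.ext fun l => and_congr_right fun hl => ?_
  obtain ⟨x, hx⟩ := exists_trunc_eq l hl.le
  have hplant : mergeLast a ∘ plantOn σ Set.univ (Fin.castSucc ∘ x) z =
      mergeLast a ∘ plantOn σ Set.univ (Fin.castSucc ∘ x) z' := by
    funext p
    by_cases hp : ∃ b, σ b = p
    · obtain ⟨b, rfl⟩ := hp
      simp only [comp_apply, plantOn_of_mem hσ.injective _ _ (Set.mem_univ b)]
    · push Not at hp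
      simp only [comp_apply, plantOn_of_notMem _ _ fun b _ => hp b, h p hp]
  have hmap (y : Fin N → Fin (k + 1)) : positionMap σ y (l.map Fin.castSucc) =
      trunc (plantOn σ Set.univ (Fin.castSucc ∘ x) y) (σ ⟨l.length, hl⟩) := by
    rw [← positionMap_trunc hσ _ _ (Set.subset_univ _), trunc_map, hx]
  simp only [hmap, hg.apply_trunc_congr hplant]

end LargeSet

/-! ### Correlation with products of insensitive functions -/

section Improvement

variable {k d m M n N : ℕ} {β ε e s : ℝ}

theorem wordAvg_mul_eq_expect_selPos {α : Type*} [Fintype α] [Nonempty α] [NeZero n]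
    (f : List α → ℝ) :
    wordAvg (m * n) f = 𝔼 j : Fin m, 𝔼 S : Fin m → Fin n, 𝔼 z : Fin (m * n) → α,
      f (trunc z (selPos S j)) := by
  rw [wordAvg_eq_expect_trunc, expect_fin_mul]
  exact expect_congr rfl fun j _ =>
    (expect_eval (β := fun _ => Fin n) j fun q => 𝔼 z, f (trunc z (blockPos j q))).symm

theorem expect_trunc_mul_eq_wordAvg {k m N : ℕ} [NeZero k] {σ : Fin m → Fin N} (hσ : StrictMono σ)
    (F : Word k → ℝ) {U : (Fin N → Fin k) → Word k → ℝ}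
    (hU : ∀ x y, U (plantOn σ Set.univ x y) = U y) :
    𝔼 j, 𝔼 z, F (trunc z (σ j)) * U z (trunc (z ∘ σ) j) =
      𝔼 y, wordAvg m fun l => F (positionMap σ y l) * U y l := by
  simp only [wordAvg_eq_expect_trunc, positionMap_trunc hσ _ _ (Set.subset_univ _)]
  rw [eq_comm, expect_comm]
  refine expect_congr rfl fun j _ => ?_
  have hread (x : Fin m → Fin k) (y : Fin N → Fin k) : plantOn σ Set.univ x y ∘ σ = x :=
    funext fun b => plantOn_of_mem hσ.injective x y (Set.mem_univ b)
  have hplant := expect_plantOn hσ.injective Set.univ fun z =>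
    F (trunc z (σ j)) * U z (trunc (z ∘ σ) j)
  simpa only [hU, hread] using hplant

theorem wordAvg_sub_le_expect_positionMap [NeZero k] [NeZero M] {η : ℝ} (hη : 0 < η)
    (hM : ((k + 1 : ℕ) : ℝ) ≤ η ^ 2 * M) {g : Word (k + 1) → ℝ} (h0 : ∀ l, 0 ≤ g l)
    (h1 : ∀ l, g l ≤ 1) [NeZero m] :
    wordAvg (m * M) g - m * η ≤ 𝔼 S : Fin m → Fin M, 𝔼 y, wordAvg m fun l : Word k =>
      g (positionMap (selPos S) y (l.map Fin.castSucc)) := by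
  calc wordAvg (m * M) g - m * η
      = 𝔼 j : Fin m, (𝔼 q : Fin M, levelAvg (blockPos j q) g - m * η) := by
        rw [expect_sub_distrib, Fintype.expect_const, wordAvg, expect_fin_mul]
    _ ≤ 𝔼 j : Fin m, 𝔼 x : Fin m → Fin k, 𝔼 S : Fin m → Fin M, 𝔼 y,
          g (positionMap (selPos S) y ((trunc x j).map Fin.castSucc)) :=
        expect_le_expect fun j _ => le_expect univ_nonempty fun x _ => by
          rw [← trunc_map]
          exact levelAvg_sub_le_expect_positionMap hη hM h0 h1 _ j
    _ = _ := by
        rw [← wordAvg_eq_expect_trunc m fun l : Word k => 𝔼 S : Fin m → Fin M, 𝔼 y,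
          g (positionMap (selPos S) y (l.map Fin.castSucc))]
        simp only [wordAvg_expect]

/-- The words over `[k]` whose letters, planted in `y` at the positions `σ 0, σ 1, …`, give a word
on which `g` is at least `e`. -/
def plantedSet (e : ℝ) (g : Word (k + 1) → ℝ) (σ : Fin m → Fin N) (y : Fin N → Fin (k + 1)) :
    Set (Word k) :=
  largeSet m e fun l => g (positionMap σ y (l.map Fin.castSucc))

theorem le_expect_ind_plantedSet [NeZero k] [NeZero m] [NeZero M] (hε : 0 < ε)
    (hm : ∀ A : Set (Word k), ε / 8 ≤ wordAvg m (ind A) → HasCSTree d A)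
    (hM : ((k + 1 : ℕ) : ℝ) ≤ (ε / (2 * m)) ^ 2 * M) {g : Word (k + 1) → ℝ} (h0 : ∀ l, 0 ≤ g l)
    (h1 : ∀ l, g l ≤ 1) (hg : ε ≤ wordAvg (m * M) g) :
    ε / 4 ≤ 𝔼 S : Fin m → Fin M, 𝔼 y,
      ind {A : Set (Word k) | HasCSTree d A} (plantedSet (ε / 8) g (selPos S) y) := by
  have hm0 : (0 : ℝ) < m := by exact_mod_cast NeZero.pos m
  have hplant := wordAvg_sub_le_expect_positionMap (m := m) (by positivity) hM h0 h1
  have hgood := expect_le_expect (s := univ) fun (S : Fin m → Fin M) _ =>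
    expect_le_expect (s := univ) fun y _ => wordAvg_le_add_ind_largeSet hm (by positivity)
      (h := fun l => g (positionMap (selPos S) y (l.map Fin.castSucc))) fun l => h1 _
  simp only [expect_add_distrib, Fintype.expect_const] at hgood
  have herror : m * (ε / (2 * m)) = ε / 2 := by field_simp
  simp only [plantedSet]
  linarith

variable {a : Fin k} {g : Word (k + 1) → ℝ} {σ : Fin m → Fin N}

theorem plantedSet_congr (hg : Insensitive a g) (hσ : StrictMono σ) {z z' : Fin N → Fin (k + 1)}
    (h : mergeLast a ∘ z = mergeLast a ∘ z') : plantedSet e g σ z = plantedSet e g σ z' :=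
  largeSet_positionMap_congr hg hσ fun p _ => congrFun h p

theorem plantedSet_plantOn (hg : Insensitive a g) (hσ : StrictMono σ) (x : Fin m → Fin (k + 1))
    (y : Fin N → Fin (k + 1)) :
    plantedSet e g σ (plantOn σ Set.univ x y) = plantedSet e g σ y :=
  largeSet_positionMap_congr hg hσ fun p hp => by rw [plantOn_of_notMem _ _ fun b _ => hp b]

theorem expect_mul_treeWeight_le (hg : Insensitive a g) (hσ : StrictMono σ)
    {F : Word (k + 1) → ℝ} (hF : TreeNegative d β F) :
    𝔼 j, 𝔼 z, F (trunc z (σ j)) * treeWeight a d (plantedSet e g σ z) (trunc (z ∘ σ) j) ≤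
      -(β / m) * 𝔼 y, ind {A | HasCSTree d A} (plantedSet e g σ y) := by
  rw [expect_trunc_mul_eq_wordAvg hσ F (U := fun z => treeWeight a d (plantedSet e g σ z))
    fun x y => by rw [plantedSet_plantOn hg hσ], mul_expect]
  exact expect_le_expect fun y _ =>
    wordAvg_mul_treeWeight_le (fun b hb => hb.1) (hF.comp (isCSMap_positionMap σ y))

theorem mul_treeWeight_plantedSet_le [NeZero d] (he : 0 ≤ e) (hg : Insensitive a g)
    (h0 : ∀ l, 0 ≤ g l) (hσ : StrictMono σ) (z : Fin N → Fin (k + 1)) (j : Fin m) :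
    e / (k + 1 : ℕ) ^ m * treeWeight a d (plantedSet e g σ z) (trunc (z ∘ σ) j) ≤
      g (trunc z (σ j)) := by
  have hself : positionMap σ z (trunc (z ∘ σ) j) = trunc z (σ j) := by
    rw [positionMap_trunc hσ _ _ (Set.subset_univ _), plantOn_comp_self hσ.injective]
  rw [← hself]
  exact mul_treeWeight_le he (hg.comp (isCSMap_positionMap σ z)) (fun _ => h0 _)
    (fun b hb => hb.2) ((length_trunc _ j).trans_le j.2.le)

theorem expect_mul_treeWeight_plantedSet_le [NeZero m] [NeZero M] (hβ : 0 ≤ β) (hε : 0 < ε)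
    (hm : ∀ A : Set (Word k), ε / 8 ≤ wordAvg m (ind A) → HasCSTree d A)
    (hM : ((k + 1 : ℕ) : ℝ) ≤ (ε / (2 * m)) ^ 2 * M) {F : Word (k + 1) → ℝ}
    (hF : TreeNegative d β F) (hg : Insensitive a g) (h0 : ∀ l, 0 ≤ g l) (h1 : ∀ l, g l ≤ 1)
    (hlarge : ε ≤ wordAvg (m * M) g) :
    𝔼 j, 𝔼 S : Fin m → Fin M, 𝔼 z, F (trunc z (selPos S j)) *
        treeWeight a d (plantedSet (ε / 8) g (selPos S) z) (trunc (z ∘ selPos S) j) ≤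
      -(β / m) * (ε / 4) := by
  have : NeZero k := ⟨a.pos.ne'⟩
  rw [expect_comm]
  calc 𝔼 S : Fin m → Fin M, 𝔼 j, 𝔼 z, F (trunc z (selPos S j)) *
          treeWeight a d (plantedSet (ε / 8) g (selPos S) z) (trunc (z ∘ selPos S) j)
      ≤ 𝔼 S : Fin m → Fin M, -(β / m) * 𝔼 y,
          ind {A | HasCSTree d A} (plantedSet (ε / 8) g (selPos S) y) :=
        expect_le_expect fun S _ => expect_mul_treeWeight_le hg (strictMono_selPos S) hF
    _ ≤ -(β / m) * (ε / 4) := by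
        rw [← mul_expect]
        exact mul_le_mul_of_nonpos_left (le_expect_ind_plantedSet hε hm hM h0 h1 hlarge)
          (neg_nonpos.2 (by positivity))

theorem CorrBound.improve [NeZero d] [NeZero m] [NeZero M] (hβ : 0 ≤ β) (hε : 0 < ε)
    (hm : ∀ A : Set (Word k), ε / 8 ≤ wordAvg m (ind A) → HasCSTree d A)
    (hMk : ((k + 1 : ℕ) : ℝ) ≤ (ε / (2 * m)) ^ 2 * M) (hM : CorrBound {a} d β M s) :
    CorrBound {a} d β (m * M) (max ε (s - β * ε ^ 2 / (32 * m * (k + 1 : ℕ) ^ m))) := by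
  intro F hF g hg h0 h1
  simp only [prod_singleton]
  specialize hg a (mem_singleton_self a)
  by_cases hsmall : wordAvg (m * M) (g a) < ε
  · exact le_max_of_le_left <| (wordAvg_mono fun l _ =>
      mul_le_of_le_one_left (h0 a l) (hF.1 l)).trans hsmall.le
  apply le_max_of_le_right
  let c : ℝ := ε / 8 / (k + 1 : ℕ) ^ m
  let U (S : Fin m → Fin M) (z : Fin (m * M) → Fin (k + 1)) (j : Fin m) : ℝ :=
    treeWeight a d (plantedSet (ε / 8) (g a) (selPos S) z) (trunc (z ∘ selPos S) j)
  have hc : 0 ≤ c := by positivity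
  have hremainder (j : Fin m) : 𝔼 S, 𝔼 z,
      F (trunc z (selPos S j)) * (g a (trunc z (selPos S j)) - c * U S z j) ≤ s := by
    refine hM.expect_selPos_le hF j (fun S z => sub_nonneg.2 ?_) (fun S z => ?_)
      fun S z z' hz hz' => ?_
    · exact mul_treeWeight_plantedSet_le (by positivity) hg (h0 a) (strictMono_selPos S) z j
    · exact (sub_le_self _ (mul_nonneg hc (treeWeight_nonneg _))).trans (h1 a _)
    · simp only [U, hz', hg.apply_trunc_congr hz, plantedSet_congr hg (strictMono_selPos S) hz]
  have hweight := expect_mul_treeWeight_plantedSet_le hβ hε hm hMk hF hg (h0 a) (h1 a)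
    (not_lt.1 hsmall)
  calc wordAvg (m * M) (fun l => F l * g a l)
      = 𝔼 j, 𝔼 S, 𝔼 z, F (trunc z (selPos S j)) * (g a (trunc z (selPos S j)) - c * U S z j) +
          c * 𝔼 j, 𝔼 S, 𝔼 z, F (trunc z (selPos S j)) * U S z j := by
        rw [wordAvg_mul_eq_expect_selPos]
        simp only [mul_expect, ← expect_add_distrib]
        ring_nf
    _ ≤ s + c * (-(β / m) * (ε / 4)) := by
        gcongr
        exact expect_le univ_nonempty fun j _ => hremainder j
    _ = s - β * ε ^ 2 / (32 * m * (k + 1 : ℕ) ^ m) := by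
        simp only [c]
        field_simp
        ring

end Improvement

/-- Every set of words of density at least `δ` below some fixed length contains a Carlson–Simpson
tree of depth `d`. -/
def ForcesTree (k d : ℕ) (δ : ℝ) : Prop :=
  ∃ n, 0 < n ∧ ∀ A : Set (Word k), δ ≤ wordAvg n (ind A) → HasCSTree d A

section CorrelationBounds

variable {k d : ℕ} {β ε : ℝ}

theorem corrBound_one {a : Fin k} : CorrBound {a} d β 1 1 := fun F hF g _ h0 h1 =>
  wordAvg_le_one fun l => by
    rw [prod_singleton]
    exact mul_le_one₀ (hF.1 l) (h0 a l) (h1 a l)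

theorem CorrBound.mono {s : Finset (Fin k)} {M : ℕ} {ε' : ℝ} (h : CorrBound s d β M ε)
    (hε : ε ≤ ε') : CorrBound s d β M ε' :=
  fun F hF g hg h0 h1 => (h F hF g hg h0 h1).trans hε

theorem exists_corrBound_singleton [NeZero d] (a : Fin k) (hforce : ∀ δ > 0, ForcesTree k d δ)
    (hβ : 0 < β) (hε : 0 < ε) : ∃ M, 0 < M ∧ CorrBound {a} d β M ε := by
  obtain ⟨m, hm0, hm⟩ := hforce (ε / 8) (by positivity)
  have : NeZero m := ⟨hm0.ne'⟩
  obtain ⟨r, hr⟩ := exists_nat_ge (((k + 1 : ℕ) : ℝ) / (ε / (2 * m)) ^ 2)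
  rw [div_le_iff₀' (by positivity)] at hr
  have : NeZero r := ⟨by
    rintro rfl
    rw [Nat.cast_zero, mul_zero] at hr
    exact absurd hr (not_le.2 (by positivity))⟩
  let η : ℝ := β * ε ^ 2 / (32 * m * (k + 1 : ℕ) ^ m)
  have hη : 0 < η := by positivity
  have hiter (i : ℕ) : ∃ M, 0 < M ∧ CorrBound {a} d β M (max ε (1 - i * η)) := by
    induction i with
    | zero => exact ⟨1, one_pos, corrBound_one.mono (by simp)⟩
    | succ i ih =>
      obtain ⟨M, hM0, hM⟩ := ih
      have : NeZero M := ⟨hM0.ne'⟩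
      refine ⟨m * (r * M), Nat.pos_of_neZero _, ((hM.mul r).improve hβ.le hε hm ?_).mono ?_⟩
      · push_cast at hr ⊢
        have hM1 : (1 : ℝ) ≤ M := by exact_mod_cast hM0
        exact hr.trans (mul_le_mul_of_nonneg_left (le_mul_of_one_le_right (by positivity) hM1)
          (by positivity))
      · refine max_le (le_max_left _ _) ?_
        change max ε (1 - i * η) - η ≤ _
        rw [← max_sub_sub_right]
        push_cast
        exact max_le_max (sub_le_self _ hη.le) (by linarith)
  obtain ⟨i, hi⟩ := exists_nat_ge (1 / η)
  obtain ⟨M, hM0, hM⟩ := hiter i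
  rw [div_le_iff₀ hη] at hi
  exact ⟨M, hM0, hM.mono (max_le le_rfl (by linarith))⟩

theorem CorrBound.treeNegative {s : Finset (Fin k)} {M : ℕ} [NeZero M]
    (hM : CorrBound s d β M ε) (hε : 0 ≤ ε) {F : Word (k + 1) → ℝ} (hF : TreeNegative d β F)
    {g : Fin k → Word (k + 1) → ℝ} (hg : ∀ a ∈ s, Insensitive a (g a)) (h0 : ∀ a l, 0 ≤ g a l)
    (h1 : ∀ a l, g a l ≤ 1) : TreeNegative M ε fun l => F l * ∏ a ∈ s, g a l - 2 * ε := by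
  refine ⟨fun l => ?_, fun Φ hΦ => ?_⟩
  · have hle : F l * ∏ a ∈ s, g a l ≤ 1 := mul_le_one₀ (hF.1 l)
      (prod_nonneg fun a _ => h0 a l) (prod_le_one (fun a _ => h0 a l) fun a _ => h1 a l)
    linarith
  · have havg := hM _ (hF.comp hΦ) (fun a l => g a (Φ l)) (fun a ha => (hg a ha).comp hΦ)
      (fun _ _ => h0 _ _) fun _ _ => h1 _ _
    rw [wordAvg_sub, wordAvg_const]
    linarith

theorem exists_corrBound (hforce : ∀ d δ, 0 < δ → ForcesTree k d δ) (s : Finset (Fin k))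
    (hd : 0 < d) (hβ : 0 < β) (hε : 0 < ε) : ∃ M, 0 < M ∧ CorrBound s d β M ε := by
  induction s using Finset.induction_on generalizing ε with
  | empty =>
    refine ⟨d, hd, fun F hF g _ _ _ => ?_⟩
    simp only [prod_empty, mul_one]
    linarith [hF.2 _ isCSMap_id]
  | insert b s hb ih =>
    obtain ⟨M₁, hM₁0, hM₁⟩ := ih (ε := ε / 3) (by positivity)
    have : NeZero M₁ := ⟨hM₁0.ne'⟩
    obtain ⟨M, hM0, hM⟩ := exists_corrBound_singleton (d := M₁) b (hforce M₁) (β := ε / 3)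
      (ε := ε / 3) (by positivity) (by positivity)
    have : NeZero M := ⟨hM0.ne'⟩
    refine ⟨M, hM0, fun F hF g hg h0 h1 => ?_⟩
    have hneg := hM₁.treeNegative (by positivity) hF (fun a ha => hg a (mem_insert_of_mem ha)) h0 h1
    have hsplit (l : Word (k + 1)) : F l * ∏ a ∈ insert b s, g a l ≤
        (F l * ∏ a ∈ s, g a l - 2 * (ε / 3)) * g b l + 2 * (ε / 3) := by
      rw [prod_insert hb]
      linarith [mul_le_mul_of_nonneg_left (h1 b l) (show 0 ≤ 2 * (ε / 3) by positivity)]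
    calc wordAvg M (fun l => F l * ∏ a ∈ insert b s, g a l)
        ≤ wordAvg M fun l => (F l * ∏ a ∈ s, g a l - 2 * (ε / 3)) * g b l + 2 * (ε / 3) :=
          wordAvg_mono fun l _ => hsplit l
      _ ≤ ε / 3 + 2 * (ε / 3) := by
          rw [wordAvg_add, wordAvg_const]
          gcongr
          exact hM.wordAvg_le hneg (hg b (mem_insert_self b s)) (h0 b) (h1 b)
      _ = ε := by ring

theorem CorrBound.subset {s t : Finset (Fin k)} {M : ℕ} (h : CorrBound t d β M ε) (hst : s ⊆ t) :
    CorrBound s d β M ε := by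
  intro F hF g hg h0 h1
  have hprod (l : Word (k + 1)) :
      ∏ a ∈ s, g a l = ∏ a ∈ t, (if a ∈ s then g a else 1) l := by
    simp only [ite_apply, Pi.one_apply, prod_ite_mem, inter_eq_right.2 hst]
  simp only [hprod]
  refine h F hF _ (fun a _ => ?_) (fun a l => ?_) fun a l => ?_ <;> split_ifs with ha
  exacts [hg a ha, fun _ => rfl, h0 a l, zero_le_one, h1 a l, le_rfl]

/-- Telescoping over the letters, `1 - ∏ hₐ = ∑ᵢ (1 - hᵢ) ∏ₐ﹤ᵢ hₐ`. -/
theorem CorrBound.wordAvg_le_wordAvg_mul_prod_add {M : ℕ}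
    (hM : CorrBound (univ : Finset (Fin k)) d β M ε) {F : Word (k + 1) → ℝ}
    (hF : TreeNegative d β F) {h : Fin k → Word (k + 1) → ℝ} (hh : ∀ a, Insensitive a (h a))
    (h0 : ∀ a l, 0 ≤ h a l) (h1 : ∀ a l, h a l ≤ 1) :
    wordAvg M F ≤ wordAvg M (fun l => F l * ∏ a, h a l) + k * ε := by
  have hsplit (l : Word (k + 1)) : F l = F l * ∏ a, h a l +
      ∑ i, F l * ∏ a ∈ Iic i, update h i (1 - h i) a l := by
    have htelescope := prod_one_sub_ordered univ fun a => 1 - h a l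
    have hprod (i : Fin k) : ∏ a ∈ Iic i, update h i (1 - h i) a l =
        (1 - h i l) * ∏ a with a < i, h a l := by
      rw [← Iio_insert, prod_insert notMem_Iio_self, update_self, filter_gt_eq_Iio]
      congr 1
      exact prod_congr rfl fun a ha => by rw [update_of_ne (mem_Iio.1 ha).ne]
    simp only [sub_sub_cancel] at htelescope
    rw [← mul_sum]
    simp only [hprod, htelescope]
    ring
  have hterm (i : Fin k) :
      wordAvg M (fun l => F l * ∏ a ∈ Iic i, update h i (1 - h i) a l) ≤ ε := by
    refine (hM.subset (subset_univ _)) F hF _ (fun a _ => ?_) (fun a l => ?_) fun a l => ?_ <;>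
      obtain rfl | ha := eq_or_ne a i <;> simp only [update_self, update_of_ne, ne_eq, *,
        not_false_eq_true, Pi.sub_apply, Pi.one_apply, sub_nonneg, sub_le_self_iff]
    exact fun l => congrArg (1 - ·) (hh a l)
  calc wordAvg M F
      = wordAvg M (fun l => F l * ∏ a, h a l) +
          ∑ i, wordAvg M fun l => F l * ∏ a ∈ Iic i, update h i (1 - h i) a l := by
        rw [← wordAvg_sum, ← wordAvg_add]
        exact wordAvg_congr fun l _ => hsplit l
    _ ≤ wordAvg M (fun l => F l * ∏ a, h a l) + k * ε := by
        gcongr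
        exact (sum_le_card_nsmul _ _ _ fun i _ => hterm i).trans_eq (by simp)

end CorrelationBounds

theorem wordAvg_ind_comp_le_of_not_hasCSTree {k d n : ℕ} {δ : ℝ}
    (h : ∀ B : Set (Word k), δ ≤ wordAvg n (ind B) → HasCSTree d B) {A : Set (Word k)}
    (hA : ¬ HasCSTree d A) (Φ : Word k → Word k) (hΦ : IsCSMap Φ) :
    wordAvg n (fun x => ind A (Φ x)) ≤ δ := by
  by_contra! hlt
  exact hA ((h (Φ ⁻¹' A) hlt.le).of_preimage hΦ)

theorem treeNegative_ind_sub {k d n : ℕ} [NeZero k] [NeZero n] {A : Set (Word k)} {e β : ℝ}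
    (hA : ¬ HasCSTree d A) (hforce : ∀ B : Set (Word k), e ≤ wordAvg n (ind B) → HasCSTree d B)
    {Θ : Word k → Word k} (hΘ : IsCSMap Θ) (heβ : 0 ≤ e + β) :
    TreeNegative n β fun z => ind A (Θ z) - (e + β) := by
  refine ⟨fun z => by linarith [ind_le_one (A := A) (Θ z)], fun Φ hΦ => ?_⟩
  rw [wordAvg_sub, wordAvg_const]
  linarith [wordAvg_ind_comp_le_of_not_hasCSTree hforce hA _ (hΘ.comp hΦ)]

/-! ### Lines -/

section LineSet

variable {k : ℕ} {A : Set (Word (k + 1))}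

/-- The words `z` such that `A` contains the points `x ⌢ a ⌢ z'`, `a ≤ k`, where `z'` is obtained
from `z` by replacing the letter `k + 1` by `a`. Together with `x` and `x ⌢ (k + 1) ⌢ z` they form a
Carlson–Simpson tree of depth two. -/
def lineSet (A : Set (Word (k + 1))) (x : Word (k + 1)) : Set (Word (k + 1)) :=
  {z | ∀ a : Fin k, x ++ a.castSucc :: z.map (mergeLast a) ∈ A}

/-- The variable word obtained from a word over `k + 1` by replacing the last letter by the
variable. -/
def lastToVar (z : Word (k + 1)) : VWord (k + 1) :=
  z.map fun c => if c = Fin.last k then none else some c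

theorem subst_lastToVar_castSucc (z : Word (k + 1)) (a : Fin k) :
    subst (lastToVar z) a.castSucc = z.map (mergeLast a) := by
  rw [subst, lastToVar, List.map_map]
  refine List.map_congr_left fun c _ => ?_
  simp only [comp_apply, mergeLast]
  split_ifs <;> rfl

theorem subst_lastToVar_last (z : Word (k + 1)) : subst (lastToVar z) (Fin.last k) = z := by
  rw [subst, lastToVar, List.map_map]
  refine List.map_id'' (fun c => ?_) z
  simp only [comp_apply]
  split_ifs with hc
  exacts [hc.symm, rfl]

theorem append_last_cons_notMem (hA : ¬ HasCSTree 2 A) {x z : Word (k + 1)} (hx : x ∈ A)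
    (hz : z ∈ lineSet A x) : x ++ Fin.last k :: z ∉ A := by
  refine fun hlast => hA (hasCSTree_two_iff.2 ⟨x, lastToVar z, hx, fun a => ?_⟩)
  induction a using Fin.lastCases with
  | last => rwa [subst_lastToVar_last]
  | cast a => rw [subst_lastToVar_castSucc]; exact hz a

theorem insensitive_ind_append (A : Set (Word (k + 1))) (x : Word (k + 1)) (a : Fin k) :
    Insensitive a fun z => ind A (x ++ a.castSucc :: z.map (mergeLast a)) := fun z => by
  simp only [List.map_map, mergeLast_comp_mergeLast]

theorem prod_ind_append_eq_ind_lineSet (A : Set (Word (k + 1))) (x z : Word (k + 1)) :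
    ∏ a : Fin k, ind A (x ++ a.castSucc :: z.map (mergeLast a)) = ind (lineSet A x) z := by
  by_cases hz : z ∈ lineSet A x
  · rw [ind_of_mem hz]
    exact prod_eq_one fun a _ => ind_of_mem (hz a)
  · rw [ind_of_notMem hz]
    obtain ⟨a, ha⟩ := not_forall.1 hz
    exact prod_eq_zero (mem_univ a) (ind_of_notMem ha)

/-- Since `A` has no tree of depth two, `x ∈ A` excludes `x ⌢ (k + 1) ⌢ z ∈ A` for every `z` in
`lineSet A x`, and on the remaining words the density of `A` is not forced above `δ`. -/
theorem CorrBound.wordAvg_add_mul_wordAvg_lineSet_le {n M : ℕ} [NeZero n] [NeZero M] {e β ε : ℝ}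
    (hM : CorrBound (univ : Finset (Fin k)) n β M ε) (hA : ¬ HasCSTree 2 A)
    (hforce : ∀ B : Set (Word (k + 1)), e ≤ wordAvg n (ind B) → HasCSTree 2 B) (he : 0 ≤ e)
    (hβ : 0 ≤ β) (hε : 0 ≤ ε) (x : Word (k + 1)) :
    wordAvg M (fun z => ind A (x ++ Fin.last k :: z)) +
      e * (ind A x * wordAvg M (ind (lineSet A x))) ≤ e + β + (k + 1) * ε := by
  have hΘ : IsCSMap fun z => x ++ Fin.last k :: z := by
    simpa using isCSMap_append_left (x ++ [Fin.last k])
  have hneg := treeNegative_ind_sub hA hforce hΘ (add_nonneg he hβ)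
  have hdiff : wordAvg M (fun z => ind A (x ++ Fin.last k :: z) - (e + β)) =
      wordAvg M (fun z => ind A (x ++ Fin.last k :: z)) - (e + β) := by
    rw [wordAvg_sub, wordAvg_const]
  by_cases hx : x ∈ A
  · have hline := hM.wordAvg_le_wordAvg_mul_prod_add hneg (insensitive_ind_append A x)
      (fun _ _ => ind_nonneg _) fun _ _ => ind_le_one _
    have hprod (z : Word (k + 1)) : (ind A (x ++ Fin.last k :: z) - (e + β)) *
        ∏ a : Fin k, ind A (x ++ a.castSucc :: z.map (mergeLast a)) =
          -(e + β) * ind (lineSet A x) z := by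
      rw [prod_ind_append_eq_ind_lineSet]
      by_cases hz : z ∈ lineSet A x
      · rw [ind_of_notMem (append_last_cons_notMem hA hx hz), zero_sub]
      · rw [ind_of_notMem hz, mul_zero, mul_zero]
    simp only [hprod, hdiff, wordAvg_const_mul] at hline
    have hnonneg : 0 ≤ wordAvg M (ind (lineSet A x)) := wordAvg_nonneg fun _ => ind_nonneg _
    rw [ind_of_mem hx, one_mul]
    linarith [mul_nonneg hβ hnonneg]
  · have hone := (hM.subset (empty_subset _)) _ hneg (fun _ _ => 0) (by simp) (by simp) (by simp)
    simp only [prod_empty, mul_one, hdiff] at hone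
    rw [ind_of_notMem hx]
    linarith [mul_nonneg (Nat.cast_nonneg (α := ℝ) k) hε]

theorem exists_wordAvg_add_mul_wordAvg_lineSet_le (hforce : ∀ d δ, 0 < δ → ForcesTree k d δ)
    {δ ξ : ℝ} (hδ : 0 < δ) (hsucc : ∀ γ > 0, ForcesTree (k + 1) 2 (δ + γ)) (hξ : 0 < ξ) :
    ∃ M, 0 < M ∧ ∀ r, 0 < r → ∀ A : Set (Word (k + 1)), ¬ HasCSTree 2 A → ∀ x,
      wordAvg (r * M) (fun z => ind A (x ++ Fin.last k :: z)) +
        δ * (ind A x * wordAvg (r * M) (ind (lineSet A x))) ≤ δ + ξ := by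
  obtain ⟨n, hn0, hn⟩ := hsucc (ξ / 4) (by positivity)
  obtain ⟨M, hM0, hM⟩ := exists_corrBound hforce univ hn0 (β := ξ / 4) (ε := ξ / (2 * (k + 1)))
    (by positivity) (by positivity)
  refine ⟨M, hM0, fun r hr A hA x => ?_⟩
  have : NeZero n := ⟨hn0.ne'⟩
  have : NeZero M := ⟨hM0.ne'⟩
  have : NeZero r := ⟨hr.ne'⟩
  have hle := (hM.mul r).wordAvg_add_mul_wordAvg_lineSet_le hA hn (by positivity) (by positivity)
    (by positivity) x
  have hnonneg : 0 ≤ ind A x * wordAvg (r * M) (ind (lineSet A x)) :=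
    mul_nonneg (ind_nonneg _) (wordAvg_nonneg fun _ => ind_nonneg _)
  have herror : ((k : ℝ) + 1) * (ξ / (2 * (k + 1))) = ξ / 2 := by field_simp
  linarith [mul_nonneg hξ.le hnonneg]

end LineSet

section RandomLevelWords

variable {k : ℕ}

/-- The word over `k + 1` obtained from a variable word over `k` by writing the last letter for the
variable. -/
def varToLast (v : VWord k) : Word (k + 1) := v.map fun o => o.elim (Fin.last k) Fin.castSucc

theorem map_mergeLast_varToLast (v : VWord k) (a : Fin k) :
    (varToLast v).map (mergeLast a) = (subst v a).map Fin.castSucc := by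
  rw [varToLast, subst, List.map_map, List.map_map]
  refine List.map_congr_left fun o _ => ?_
  cases o with
  | none => exact if_pos rfl
  | some b => exact mergeLast_castSucc a b

theorem map_mergeLast_lastToVar (z : Word (k + 1)) (a : Fin k) :
    (lastToVar z).map (Option.map (mergeLast a)) = lastToVar z := by
  rw [lastToVar, List.map_map]
  refine List.map_congr_left fun c _ => ?_
  simp only [comp_apply]
  split_ifs with hc
  · rfl
  · exact congrArg some (if_neg hc)

theorem substSeq_map_castSucc_line {w : ℕ → VWord (k + 1)} {a : Fin k}
    (hw : ∀ i, (w i).map (Option.map (mergeLast a)) = w i) {x : Word k} {z : Word (k + 1)}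
    (hz : w x.length = none :: lastToVar z) (v : VWord k) :
    substSeq w ((x ++ a :: subst v a).map Fin.castSucc) =
      substSeq w (x.map Fin.castSucc) ++ a.castSucc ::
        (z ++ substSeq (fun i => w (i + (x.length + 1))) (varToLast v)).map (mergeLast a) := by
  have htail := substSeq_map (mergeLast a) (fun i => w (i + (x.length + 1))) (varToLast v)
  simp only [hw, map_mergeLast_varToLast] at htail
  rw [List.append_cons, List.map_append, List.map_append, List.map_singleton, substSeq_append,
    substSeq_concat, List.length_append, List.length_map, List.length_singleton, htail, hz]
  change _ ++ a.castSucc :: subst (lastToVar z) a.castSucc ++ _ = _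
  rw [subst_lastToVar_castSucc]
  simp

/-- The words over `k` that are mapped into `A` by substitution into `w`. -/
def pullback (A : Set (Word (k + 1))) (w : ℕ → VWord (k + 1)) : Set (Word k) :=
  {x | substSeq w (x.map Fin.castSucc) ∈ A}

theorem HasLine.append_mem_lineSet {A : Set (Word (k + 1))} {w : ℕ → VWord (k + 1)}
    (hw : ∀ (a : Fin k) i, (w i).map (Option.map (mergeLast a)) = w i) {x : Word k}
    {z : Word (k + 1)} (hz : w x.length = none :: lastToVar z) {v : VWord k}
    (h : HasLine (pullback A w) x v) :
    z ++ substSeq (fun i => w (i + (x.length + 1))) (varToLast v) ∈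
      lineSet A (substSeq w (x.map Fin.castSucc)) := fun a =>
  substSeq_map_castSucc_line (hw a) hz v ▸ h.2 a

variable {m : ℕ} {M : ℕ → ℕ}

/-- The sample space of the random level words: the `i`-th coordinate encodes a word of length less
than `M i`, namely the truncation of a word of length `M i`. -/
abbrev LevelSample (k m : ℕ) (M : ℕ → ℕ) : Type :=
  ∀ i : Fin m, Fin (M i) × (Fin (M i) → Fin (k + 1))

/-- The left variable words determined by a sample. -/
def levelWord (p : LevelSample k m M) (i : ℕ) : VWord (k + 1) :=
  if h : i < m then none :: lastToVar (trunc (p ⟨i, h⟩).2 (p ⟨i, h⟩).1) else [none]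

theorem levelWord_of_lt (p : LevelSample k m M) (j : Fin m) :
    levelWord p j = none :: lastToVar (trunc (p j).2 (p j).1) :=
  dif_pos j.2

theorem map_mergeLast_levelWord (p : LevelSample k m M) (a : Fin k) (i : ℕ) :
    (levelWord p i).map (Option.map (mergeLast a)) = levelWord p i := by
  rw [levelWord]
  split_ifs
  · rw [List.map_cons, map_mergeLast_lastToVar, Option.map_none]
  · rfl

theorem length_levelWord_le (p : LevelSample k m M) {i : ℕ} (hi : i < m) :
    (levelWord p i).length ≤ M i := by
  rw [levelWord_of_lt p ⟨i, hi⟩, List.length_cons, lastToVar, List.length_map, length_trunc]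
  exact (p ⟨i, hi⟩).1.2

theorem levelWord_update_of_ne (p : LevelSample k m M) {j : Fin m}
    (q : Fin (M j) × (Fin (M j) → Fin (k + 1))) {i : ℕ} (hi : i ≠ j) :
    levelWord (update p j q) i = levelWord p i := by
  rw [levelWord, levelWord]
  split_ifs with h
  · rw [update_of_ne fun hj => hi (congrArg Fin.val hj)]
  · rfl

theorem length_substSeq_levelWord_le (p : LevelSample k m M) {s : ℕ} {x : Word (k + 1)}
    (hx : s + x.length ≤ m) :
    (substSeq (fun i => levelWord p (i + s)) x).length ≤ ∑ i ∈ Ico s m, M i := by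
  rw [length_substSeq, sum_Ico_eq_sum_range]
  calc ∑ i ∈ range x.length, (levelWord p (i + s)).length
      ≤ ∑ i ∈ range x.length, M (s + i) := sum_le_sum fun i hi => by
        rw [add_comm i s]
        exact length_levelWord_le p (by have := mem_range.1 hi; lia)
    _ ≤ ∑ i ∈ range (m - s), M (s + i) :=
        sum_le_sum_of_subset (range_subset_range.2 (Nat.le_sub_of_add_le' hx))

theorem HasLine.append_mem_lineSet_of_update {A : Set (Word (k + 1))} {p : LevelSample k m M}
    {j : Fin m} {q : Fin (M j) × (Fin (M j) → Fin (k + 1))} {x : Word k} (hx : x.length = j)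
    {v : VWord k} (h : HasLine (pullback A (levelWord (update p j q))) x v) :
    substSeq (levelWord p) (x.map Fin.castSucc) ∈ A ∧
      trunc q.2 q.1 ++ substSeq (fun i => levelWord p (i + (j + 1))) (varToLast v) ∈
        lineSet A (substSeq (levelWord p) (x.map Fin.castSucc)) := by
  have hhead : substSeq (levelWord (update p j q)) (x.map Fin.castSucc) =
      substSeq (levelWord p) (x.map Fin.castSucc) :=
    substSeq_congr fun i hi => levelWord_update_of_ne p q (by rw [List.length_map] at hi; lia)
  have htail : substSeq (fun i => levelWord (update p j q) (i + (j + 1))) (varToLast v) =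
      substSeq (fun i => levelWord p (i + (j + 1))) (varToLast v) :=
    substSeq_congr fun i _ => levelWord_update_of_ne p q (by lia)
  have hj : levelWord (update p j q) x.length = none :: lastToVar (trunc q.2 q.1) := by
    rw [hx, levelWord_of_lt, update_self]
  have hmem := h.append_mem_lineSet (map_mergeLast_levelWord _) hj
  rw [hx, htail, hhead] at hmem
  exact ⟨hhead ▸ h.1, hmem⟩

theorem expect_ind_hasLine_update_le (A : Set (Word (k + 1))) (p : LevelSample k m M) {j : Fin m}
    {x : Word k} (hx : x.length = j) {v : VWord k} (hv : j + 1 + v.length ≤ m)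
    (hM : ∑ i ∈ Ico (j + 1 : ℕ) m, M i ≤ M j) :
    𝔼 q, ind {B | HasLine B x v} (pullback A (levelWord (update p j q))) ≤
      2 * ((k + 1 : ℕ) : ℝ) ^ (∑ i ∈ Ico (j + 1 : ℕ) m, M i) *
        (ind A (substSeq (levelWord p) (x.map Fin.castSucc)) *
          wordAvg (2 * M j) (ind (lineSet A (substSeq (levelWord p) (x.map Fin.castSucc))))) := by
  set x₀ := substSeq (levelWord p) (x.map Fin.castSucc)
  set τ := substSeq (fun i => levelWord p (i + (j + 1))) (varToLast v)
  have hτM : τ.length ≤ ∑ i ∈ Ico (j + 1 : ℕ) m, M i :=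
    length_substSeq_levelWord_le p (by rwa [varToLast, List.length_map])
  have hind (q : Fin (M j) × (Fin (M j) → Fin (k + 1))) :
      ind {B | HasLine B x v} (pullback A (levelWord (update p j q))) ≤
        ind A x₀ * ind (lineSet A x₀) (trunc q.2 q.1 ++ τ) := by
    by_cases h : HasLine (pullback A (levelWord (update p j q))) x v
    · obtain ⟨hhead, hmem⟩ := h.append_mem_lineSet_of_update hx
      rw [ind_of_mem hhead, ind_of_mem hmem, one_mul]
      exact ind_le_one _
    · rw [ind_of_notMem (A := {B | HasLine B x v}) h]
      exact mul_nonneg (ind_nonneg _) (ind_nonneg _)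
  calc 𝔼 q, ind {B | HasLine B x v} (pullback A (levelWord (update p j q)))
      ≤ 𝔼 q : Fin (M j) × (Fin (M j) → Fin (k + 1)),
          ind A x₀ * ind (lineSet A x₀) (trunc q.2 q.1 ++ τ) := expect_le_expect fun q _ => hind q
    _ = ind A x₀ * wordAvg (M j) fun u => ind (lineSet A x₀) (u ++ τ) := by
        rw [wordAvg_eq_expect_trunc, expect_expect, mul_expect]
    _ ≤ ind A x₀ * (2 * ((k + 1 : ℕ) : ℝ) ^ (∑ i ∈ Ico (j + 1 : ℕ) m, M i) *
          wordAvg (2 * M j) (ind (lineSet A x₀))) := by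
        have hnonneg : 0 ≤ wordAvg (2 * M j) (ind (lineSet A x₀)) :=
          wordAvg_nonneg fun _ => ind_nonneg _
        have hsuffix := wordAvg_append_right_le (f := ind (lineSet A x₀)) (fun _ => ind_nonneg _)
          (hτM.trans hM)
        rw [Fintype.card_fin] at hsuffix
        refine mul_le_mul_of_nonneg_left (hsuffix.trans ?_) (ind_nonneg _)
        gcongr
        simp
    _ = _ := by ring

end RandomLevelWords

theorem exists_forall_sum_Ico {P : ℕ → ℕ → Prop} (h : ∀ b, ∃ M, P b M) (m : ℕ) :
    ∃ M : ℕ → ℕ, ∀ i < m, P (∑ s ∈ Ico (i + 1) m, M s) (M i) := by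
  induction m with
  | zero => exact ⟨fun _ => 0, by simp⟩
  | succ m ih =>
    obtain ⟨M, hM⟩ := ih
    obtain ⟨M₀, hM₀⟩ := h (∑ s ∈ range m, M s)
    let M' : ℕ → ℕ := fun i => Nat.casesOn i M₀ M
    have hshift (i : ℕ) : ∑ s ∈ Ico (i + 1) (m + 1), M' s = ∑ s ∈ Ico i m, M s :=
      (sum_Ico_add' M' i m 1).symm
    refine ⟨M', fun i hi => ?_⟩
    rw [hshift]
    cases i with
    | zero => rwa [Nat.Ico_zero_eq_range]
    | succ i => exact hM i (Nat.lt_of_succ_lt_succ hi)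

theorem hasCSTree_inter_of_le_wordAvg {k d n : ℕ} {δ : ℝ}
    (h : ∀ A : Set (Word k), δ ≤ wordAvg n (ind A) → HasCSTree d A) {A : Set (Word k)}
    (hA : δ ≤ wordAvg n (ind A)) : HasCSTree d (A ∩ {l | l.length < n}) := by
  refine h _ (hA.trans_eq (wordAvg_congr fun l hl => ?_))
  exact Set.indicator_eq_indicator (by simp [hl]) rfl

theorem exists_wordAvg_le_add_sum_hasLine {k m : ℕ} [NeZero k] [NeZero m] {δ : ℝ} (hδ : 0 ≤ δ)
    (hm : ∀ B : Set (Word k), δ ≤ wordAvg m (ind B) → HasCSTree 2 B) :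
    ∃ Λ : Finset (Word k × VWord k), (∀ q ∈ Λ, q.1.length + 1 + q.2.length < m) ∧
      ∀ B, wordAvg m (ind B) ≤ δ + ∑ q ∈ Λ, ind {B | HasLine B q.1 q.2} B := by
  have hfin : {q : Word k × VWord k | q.1.length + 1 + q.2.length < m}.Finite := by
    refine ((List.finite_length_lt (Fin k) m).prod
      (List.finite_length_lt (Option (Fin k)) m)).subset fun q hq => ?_
    simp only [Set.mem_ofPred_eq, Set.mem_prod] at hq ⊢
    lia
  refine ⟨hfin.toFinset, fun q hq => hfin.mem_toFinset.1 hq, fun B => ?_⟩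
  have hnonneg (q : Word k × VWord k) : 0 ≤ ind {B | HasLine B q.1 q.2} B := ind_nonneg _
  obtain hB | hB := le_or_gt δ (wordAvg m (ind B))
  · obtain ⟨x, v, hx, hv⟩ := hasCSTree_two_iff.1 (hasCSTree_inter_of_le_wordAvg hm hB)
    have hmem : (x, v) ∈ hfin.toFinset := by
      have hlen := (hv 0).2
      simp only [Set.mem_ofPred_eq, List.length_append, List.length_cons, length_subst] at hlen
      rw [hfin.mem_toFinset, Set.mem_ofPred_eq]
      lia
    have hline : ind {B | HasLine B x v} B = 1 := ind_of_mem ⟨hx.1, fun a => (hv a).1⟩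
    calc wordAvg m (ind B) ≤ 1 := wordAvg_le_one fun l => ind_le_one l
      _ ≤ ∑ q ∈ hfin.toFinset, ind {B | HasLine B q.1 q.2} B :=
          hline.symm.le.trans (single_le_sum (fun q _ => hnonneg q) hmem)
      _ ≤ _ := le_add_of_nonneg_left hδ
  · exact hB.le.trans (le_add_of_nonneg_right (sum_nonneg fun q _ => hnonneg q))

theorem le_expect_wordAvg_of_forall_le {Ω α β : Type*} [Fintype Ω] [Fintype β] [Nonempty β]
    {A : Ω → Set (List α)} {c : ℝ} {n T : ℕ} [NeZero n]
    (hA : ∀ l, l.length < T → c ≤ 𝔼 ω, ind (A ω) l) (g : List β → List α)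
    (hg : ∀ l, l.length < n → (g l).length < T) :
    c ≤ 𝔼 ω, wordAvg n fun l => ind (A ω) (g l) := by
  rw [← wordAvg_expect, ← wordAvg_const (α := β) (n := n) c]
  exact wordAvg_mono fun l hl => hA _ (hg l hl)

section RandomSets

variable {k : ℕ} {Ω : Type} [Fintype Ω] [Nonempty Ω] {A : Ω → Set (Word (k + 1))} {δ ε ξ : ℝ}

theorem mul_expect_ind_mul_wordAvg_lineSet_le {n T : ℕ} [NeZero n] {x : Word (k + 1)}
    (hline : ∀ ω, wordAvg n (fun z => ind (A ω) (x ++ Fin.last k :: z)) +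
      δ * (ind (A ω) x * wordAvg n (ind (lineSet (A ω) x))) ≤ δ + ξ)
    (hA : ∀ l, l.length < T → δ - ε ≤ 𝔼 ω, ind (A ω) l) (hT : x.length + n < T) :
    δ * 𝔼 ω, ind (A ω) x * wordAvg n (ind (lineSet (A ω) x)) ≤ ξ + ε := by
  have hlower := le_expect_wordAvg_of_forall_le (n := n) hA (fun z => x ++ Fin.last k :: z)
    fun z hz => by
      rw [List.length_append, List.length_cons]
      lia
  have hupper := expect_le_expect fun ω (_ : ω ∈ univ) => hline ω
  rw [expect_add_distrib, Fintype.expect_const, ← mul_expect] at hupper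
  linarith

theorem expect_expect_ind_hasLine_le {m T : ℕ} {M : ℕ → ℕ} {j : Fin m} [∀ i : Fin m, NeZero (M i)]
    (hM : ∑ i ∈ Ico (j + 1 : ℕ) m, M i ≤ M j) (hδ : 0 < δ)
    (hline : ∀ ω x, wordAvg (2 * M j) (fun z => ind (A ω) (x ++ Fin.last k :: z)) +
      δ * (ind (A ω) x * wordAvg (2 * M j) (ind (lineSet (A ω) x))) ≤ δ + ξ)
    (hA : ∀ l, l.length < T → δ - ε ≤ 𝔼 ω, ind (A ω) l)
    (hT : ∑ i ∈ Ico 0 m, M i + 2 * M j < T) {x : Word k} (hx : x.length = j) {v : VWord k}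
    (hv : j + 1 + v.length ≤ m) :
    𝔼 p : LevelSample k m M, 𝔼 ω, ind {B | HasLine B x v} (pullback (A ω) (levelWord p)) ≤
      2 * ((k + 1 : ℕ) : ℝ) ^ (∑ i ∈ Ico (j + 1 : ℕ) m, M i) * ((ξ + ε) / δ) := by
  rw [← expect_update j]
  refine expect_le univ_nonempty fun p _ => ?_
  have hx₀ : (substSeq (levelWord p) (x.map Fin.castSucc)).length ≤ ∑ i ∈ Ico 0 m, M i :=
    length_substSeq_levelWord_le (s := 0) p (by rw [List.length_map]; lia)
  have hrare := mul_expect_ind_mul_wordAvg_lineSet_le (fun ω => hline ω _) hA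
    ((Nat.add_le_add_right hx₀ _).trans_lt hT)
  rw [expect_comm]
  calc 𝔼 ω, 𝔼 q, ind {B | HasLine B x v} (pullback (A ω) (levelWord (update p j q)))
      ≤ 𝔼 ω, 2 * ((k + 1 : ℕ) : ℝ) ^ (∑ i ∈ Ico (j + 1 : ℕ) m, M i) *
          (ind (A ω) (substSeq (levelWord p) (x.map Fin.castSucc)) * wordAvg (2 * M j)
            (ind (lineSet (A ω) (substSeq (levelWord p) (x.map Fin.castSucc))))) :=
        expect_le_expect fun ω _ => expect_ind_hasLine_update_le (A ω) p hx hv hM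
    _ ≤ _ := by
        rw [← mul_expect]
        gcongr
        exact (le_div_iff₀' hδ).2 hrare

theorem exists_lengths_wordAvg_add_mul_wordAvg_lineSet_le
    (hforce : ∀ d δ, 0 < δ → ForcesTree k d δ) (hδ : 0 < δ)
    (hsucc : ∀ γ > 0, ForcesTree (k + 1) 2 (δ + γ)) {ξ : ℕ → ℝ} (hξ : ∀ b, 0 < ξ b) (m : ℕ) :
    ∃ M : ℕ → ℕ, ∀ i < m, 0 < M i ∧ ∑ s ∈ Ico (i + 1) m, M s ≤ M i ∧
      ∀ A : Set (Word (k + 1)), ¬ HasCSTree 2 A → ∀ x,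
        wordAvg (2 * M i) (fun z => ind A (x ++ Fin.last k :: z)) +
          δ * (ind A x * wordAvg (2 * M i) (ind (lineSet A x))) ≤
            δ + ξ (∑ s ∈ Ico (i + 1) m, M s) := by
  have hlocal (b : ℕ) : ∃ M, 0 < M ∧ b ≤ M ∧ ∀ A : Set (Word (k + 1)), ¬ HasCSTree 2 A → ∀ x,
      wordAvg (2 * M) (fun z => ind A (x ++ Fin.last k :: z)) +
        δ * (ind A x * wordAvg (2 * M) (ind (lineSet A x))) ≤ δ + ξ b := by
    obtain ⟨M, hM0, hM⟩ := exists_wordAvg_add_mul_wordAvg_lineSet_le hforce hδ hsucc (hξ b)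
    refine ⟨(b + 1) * M, by positivity, by nlinarith, ?_⟩
    rw [← mul_assoc]
    exact hM _ (by positivity)
  exact exists_forall_sum_Ico hlocal m

theorem exists_levels_expect_ind_hasLine_le (hforce : ∀ d δ, 0 < δ → ForcesTree k d δ)
    (hδ : 0 < δ) (hsucc : ∀ γ > 0, ForcesTree (k + 1) 2 (δ + γ)) {θ : ℝ} (hθ : 0 < θ) (m : ℕ) :
    ∃ (M : ℕ → ℕ) (T : ℕ) (ε : ℝ), 0 < ε ∧ (∀ i : Fin m, 0 < M i) ∧ ∑ i ∈ Ico 0 m, M i < T ∧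
      ∀ (Ω : Type) [Fintype Ω] [Nonempty Ω] (A : Ω → Set (Word (k + 1))),
        (∀ ω, ¬ HasCSTree 2 (A ω)) → (∀ l, l.length < T → δ - ε ≤ 𝔼 ω, ind (A ω) l) →
        ∀ (x : Word k) (v : VWord k), x.length + 1 + v.length < m →
          𝔼 p : LevelSample k m M, 𝔼 ω, ind {B | HasLine B x v} (pullback (A ω) (levelWord p)) ≤
            θ := by
  let ξ (b : ℕ) : ℝ := δ * θ / (4 * ((k + 1 : ℕ) : ℝ) ^ b)
  have hξ (b : ℕ) : 0 < ξ b := by positivity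
  have hξ_anti : Antitone ξ := fun b b' hb => by
    have hone : (1 : ℝ) ≤ (k + 1 : ℕ) := by simp
    simp only [ξ]
    gcongr
  obtain ⟨M, hM⟩ := exists_lengths_wordAvg_add_mul_wordAvg_lineSet_le hforce hδ hsucc hξ m
  have hsum (j : Fin m) : ∑ i ∈ Ico (j + 1 : ℕ) m, M i ≤ ∑ i ∈ Ico 0 m, M i :=
    sum_le_sum_of_subset (Ico_subset_Ico_left (Nat.zero_le _))
  have hle (j : Fin m) : M j ≤ ∑ i ∈ Ico 0 m, M i :=
    single_le_sum (fun _ _ => Nat.zero_le _) (mem_Ico.2 ⟨Nat.zero_le _, j.2⟩)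
  refine ⟨M, 3 * ∑ i ∈ Ico 0 m, M i + 1, ξ (∑ i ∈ Ico 0 m, M i), hξ _, fun i => (hM i i.2).1,
    by lia, fun Ω _ _ A hfree hA x v hxv => ?_⟩
  have (i : Fin m) : NeZero (M i) := ⟨(hM i i.2).1.ne'⟩
  let j : Fin m := ⟨x.length, by lia⟩
  obtain ⟨-, hjM, hj⟩ := hM j j.2
  have hT : ∑ i ∈ Ico 0 m, M i + 2 * M j < 3 * ∑ i ∈ Ico 0 m, M i + 1 := by
    have := hle j
    lia
  refine (expect_expect_ind_hasLine_le hjM hδ (fun ω => hj (A ω) (hfree ω)) hA hT rfl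
    hxv.le).trans ?_
  calc 2 * ((k + 1 : ℕ) : ℝ) ^ (∑ i ∈ Ico (j + 1 : ℕ) m, M i) *
        ((ξ (∑ i ∈ Ico (j + 1 : ℕ) m, M i) + ξ (∑ i ∈ Ico 0 m, M i)) / δ)
      ≤ 2 * ((k + 1 : ℕ) : ℝ) ^ (∑ i ∈ Ico (j + 1 : ℕ) m, M i) *
        ((ξ (∑ i ∈ Ico (j + 1 : ℕ) m, M i) + ξ (∑ i ∈ Ico (j + 1 : ℕ) m, M i)) / δ) := by
        gcongr
        exact hξ_anti (hsum j)
    _ = θ := by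
      simp only [ξ]
      field_simp
      ring

theorem exists_forall_hasCSTree_two_of_forall_le_expect [NeZero k]
    (hforce : ∀ d δ, 0 < δ → ForcesTree k d δ) (hδ : 0 < δ)
    (hsucc : ∀ γ > 0, ForcesTree (k + 1) 2 (δ + γ)) :
    ∃ (T : ℕ) (ε : ℝ), 0 < T ∧ 0 < ε ∧ ∀ (Ω : Type) [Fintype Ω] [Nonempty Ω]
      (A : Ω → Set (Word (k + 1))), (∀ l, l.length < T → δ - ε ≤ 𝔼 ω, ind (A ω) l) →
        ∃ ω, HasCSTree 2 (A ω) := by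
  obtain ⟨m, hm0, hm⟩ := hforce 2 (δ / 4) (by positivity)
  have : NeZero m := ⟨hm0.ne'⟩
  obtain ⟨Λ, hΛ, hle⟩ := exists_wordAvg_le_add_sum_hasLine (by positivity) hm
  obtain ⟨M, T, ε, hε, hM0, hT, hM⟩ := exists_levels_expect_ind_hasLine_le hforce hδ hsucc
    (θ := δ / (4 * (#Λ + 1))) (by positivity) m
  have (i : Fin m) : NeZero (M i) := ⟨(hM0 i).ne'⟩
  refine ⟨T, min ε (δ / 8), by lia, by positivity, fun Ω _ _ A hA => ?_⟩
  by_contra! hfree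
  have hlines := hM Ω A hfree fun l hl => (sub_le_sub_left (min_le_left _ _) δ).trans (hA l hl)
  have hlower : δ - min ε (δ / 8) ≤
      𝔼 p : LevelSample k m M, 𝔼 ω, wordAvg m (ind (pullback (A ω) (levelWord p))) :=
    le_expect univ_nonempty fun p _ => le_expect_wordAvg_of_forall_le (n := m) hA
      (fun l : Word k => substSeq (levelWord p) (l.map Fin.castSucc)) fun l hl =>
        (length_substSeq_levelWord_le (s := 0) p (by rw [List.length_map]; lia)).trans_lt hT
  have hupper : 𝔼 p : LevelSample k m M, 𝔼 ω, wordAvg m (ind (pullback (A ω) (levelWord p))) ≤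
      δ / 4 + #Λ * (δ / (4 * (#Λ + 1))) := by
    calc 𝔼 p : LevelSample k m M, 𝔼 ω, wordAvg m (ind (pullback (A ω) (levelWord p)))
        ≤ 𝔼 p : LevelSample k m M, 𝔼 ω, (δ / 4 +
            ∑ q ∈ Λ, ind {B | HasLine B q.1 q.2} (pullback (A ω) (levelWord p))) :=
          expect_le_expect fun p _ => expect_le_expect fun ω _ => hle _
      _ = δ / 4 + ∑ q ∈ Λ, 𝔼 p : LevelSample k m M, 𝔼 ω,
            ind {B | HasLine B q.1 q.2} (pullback (A ω) (levelWord p)) := by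
          simp only [expect_add_distrib, Fintype.expect_const, expect_sum_comm]
      _ ≤ δ / 4 + #Λ * (δ / (4 * (#Λ + 1))) := by
          gcongr
          exact (sum_le_card_nsmul _ _ _ fun q hq => hlines q.1 q.2 (hΛ q hq)).trans_eq
            (nsmul_eq_mul _ _)
  have hΛδ : #Λ * (δ / (4 * (#Λ + 1))) ≤ δ / 4 := by
    rw [mul_div_assoc', div_le_div_iff₀ (by positivity) (by positivity)]
    nlinarith
  linarith [min_le_right ε (δ / 8)]

end RandomSets

/-! ### The density increment -/

theorem sub_card_mul_le_of_forall_le {ι : Type*} [Fintype ι] {f : ι → ℝ} {u : ℝ}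
    (h : ∀ i, f i ≤ u) (i : ι) : u - Fintype.card ι * (u - 𝔼 j, f j) ≤ f i := by
  have : Nonempty ι := ⟨i⟩
  have hle : u - f i ≤ ∑ j, (u - f j) :=
    single_le_sum (f := fun j => u - f j) (fun j _ => sub_nonneg.2 (h j)) (mem_univ i)
  rw [← Fintype.card_mul_expect, expect_sub_distrib, Fintype.expect_const] at hle
  linarith

theorem ForcesTree.mono {k d : ℕ} {δ δ' : ℝ} (h : ForcesTree k d δ) (hδ : δ ≤ δ') :
    ForcesTree k d δ' :=
  let ⟨n, hn, h⟩ := h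
  ⟨n, hn, fun A hA => h A (hδ.trans hA)⟩

theorem le_expect_levelAvg_blockPos_of_not_hasCSTree {k d T r N : ℕ} [NeZero k] [NeZero r]
    {δ u : ℝ} (h : ∀ B : Set (Word k), u ≤ wordAvg N (ind B) → HasCSTree d B) {A : Set (Word k)}
    (hA : ¬ HasCSTree d A) (hδ : δ ≤ wordAvg (T * (r * N)) (ind A)) (j : Fin T) :
    u - T * (u - δ) ≤ 𝔼 q : Fin (r * N), levelAvg (blockPos j q) (ind A) := by
  have hle (i : Fin T) : 𝔼 q : Fin (r * N), levelAvg (blockPos i q) (ind A) ≤ u :=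
    expect_levelAvg_apply_le (strictMono_blockPos i) fun Φ hΦ =>
      wordAvg_mul_le fun Ψ hΨ => wordAvg_ind_comp_le_of_not_hasCSTree h hA _ (hΦ.comp hΨ)
  rw [wordAvg, expect_fin_mul] at hδ
  refine le_trans ?_ (sub_card_mul_le_of_forall_le hle j)
  rw [Fintype.card_fin]
  gcongr

theorem exists_sub_forcesTree_two {k : ℕ} [NeZero k] (hforce : ∀ d δ, 0 < δ → ForcesTree k d δ)
    {δ : ℝ} (hδ : 0 < δ) (hsucc : ∀ γ > 0, ForcesTree (k + 1) 2 (δ + γ)) :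
    ∃ η > 0, ForcesTree (k + 1) 2 (δ - η) := by
  obtain ⟨T, ε, hT, hε, hfamily⟩ :=
    exists_forall_hasCSTree_two_of_forall_le_expect hforce hδ hsucc
  let η : ℝ := ε / (4 * T)
  have hη : 0 < η := by positivity
  have hTη : T * (4 * η) = ε := by
    simp only [η]
    field_simp
  obtain ⟨N, hN0, hN⟩ := hsucc η hη
  obtain ⟨r, hr⟩ := exists_nat_ge (((k + 1 : ℕ) : ℝ) / (2 * η) ^ 2)
  have hr0 : 0 < r := by exact_mod_cast (show (0 : ℝ) < _ by positivity).trans_le hr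
  have : NeZero r := ⟨hr0.ne'⟩
  have : NeZero N := ⟨hN0.ne'⟩
  have hrN : ((k + 1 : ℕ) : ℝ) ≤ (2 * η) ^ 2 * (r * N : ℕ) := by
    refine ((div_le_iff₀' (by positivity)).1 hr).trans ?_
    gcongr
    exact Nat.le_mul_of_pos_right r hN0
  refine ⟨η, hη, T * (r * N), by positivity, fun A hA => ?_⟩
  by_contra hfree
  obtain ⟨ω, hω⟩ := hfamily ((Fin T → Fin (r * N)) × (Fin (T * (r * N)) → Fin (k + 1)))
    (fun ω => positionMap (selPos ω.1) ω.2 ⁻¹' A) fun l hl => by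
      obtain ⟨x, hx⟩ := exists_trunc_eq l hl.le
      have hplant := levelAvg_sub_le_expect_positionMap (by positivity) hrN
        (f := ind A) ind_nonneg ind_le_one x ⟨l.length, hl⟩
      have hblock := le_expect_levelAvg_blockPos_of_not_hasCSTree hN hfree hA ⟨l.length, hl⟩
      rw [hx, expect_expect] at hplant
      refine le_trans ?_ hplant
      linarith
  exact hfree (hω.of_preimage (isCSMap_positionMap _ _))

theorem forcesTree_succ_two {k : ℕ} [NeZero k] (hforce : ∀ d δ, 0 < δ → ForcesTree k d δ) {δ : ℝ}
    (hδ : 0 < δ) : ForcesTree (k + 1) 2 δ := by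
  by_contra hfail
  let S : Set ℝ := {x | ¬ ForcesTree (k + 1) 2 x}
  have htwo : ForcesTree (k + 1) 2 2 := ⟨1, one_pos, fun A hA =>
    absurd (hA.trans (wordAvg_le_one ind_le_one)) (by norm_num)⟩
  have hbdd : BddAbove S := ⟨2, fun x hx => le_of_not_ge fun h => hx (htwo.mono h)⟩
  have hsucc (γ : ℝ) (hγ : γ > 0) : ForcesTree (k + 1) 2 (sSup S + γ) := by
    by_contra hmem
    linarith [le_csSup hbdd hmem]
  obtain ⟨η, hη, hforce'⟩ :=
    exists_sub_forcesTree_two hforce (hδ.trans_le (le_csSup hbdd hfail)) hsucc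
  obtain ⟨x, hx, hlt⟩ := exists_lt_of_lt_csSup ⟨δ, hfail⟩ (sub_lt_self (sSup S) hη)
  exact hx (hforce'.mono hlt.le)

/-! ### Trees of arbitrary depth -/

section Depth

variable {k e n : ℕ}

/-- The words `x` such that the tree of depth `e` with root `x` and level words `w₀, w₁, …` is
contained in `A`. -/
def treeRoots (w : ℕ → VWord k) (e : ℕ) (A : Set (Word k)) : Set (Word k) :=
  {x | ∀ l : Word k, l.length < e → x ++ substSeq w l ∈ A}

theorem treeRoots_congr {w w' : ℕ → VWord k} (h : ∀ i < e, w i = w' i) (A : Set (Word k)) :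
    treeRoots w (e + 1) A = treeRoots w' (e + 1) A := by
  have hsubst (l : Word k) (hl : l.length < e + 1) : substSeq w l = substSeq w' l :=
    substSeq_congr fun i hi => h i (hi.trans_le (Nat.le_of_lt_succ hl))
  ext x
  exact forall₂_congr fun l hl => by rw [hsubst l hl]

theorem treeRoots_preimage_append (w : ℕ → VWord k) (x : Word k) (A : Set (Word k)) :
    treeRoots w e ((x ++ ·) ⁻¹' A) = (x ++ ·) ⁻¹' treeRoots w e A := by
  ext y
  simp only [treeRoots, Set.mem_preimage, Set.mem_ofPred_eq, List.append_assoc]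

theorem hasCSTree_of_hasCSTree_two_treeRoots {w : ℕ → VWord k} (hw : ∀ i, IsLeftVar (w i))
    {A : Set (Word k)} (he : 0 < e)
    (h : HasCSTree 2 (treeRoots w e A)) : HasCSTree (e + 1) A := by
  obtain ⟨x, v, hx, hv⟩ := hasCSTree_two_iff.1 h
  refine ⟨_, ⟨x, fun i => Nat.casesOn i (none :: v) w, ?_, fun _ => rfl⟩, fun l hl => ?_⟩
  · rintro (_ | i)
    exacts [rfl, hw i]
  · cases l with
    | nil => simpa [substSeq] using hx [] he
    | cons a l =>
      simpa [substSeq, List.mapIdx_cons, subst] using hv a l (Nat.lt_of_succ_lt_succ hl)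

theorem exists_finset_isLeftVar (k e n : ℕ) : ∃ Λ : Finset (ℕ → VWord k),
    (∀ w ∈ Λ, ∀ i, IsLeftVar (w i)) ∧ ∀ w : ℕ → VWord k, (∀ i, IsLeftVar (w i)) →
      (∀ i < e, (w i).length < n) → ∃ w' ∈ Λ, ∀ i < e, w' i = w i := by
  classical
  have hfin : {v : VWord k | v.length < n ∧ IsLeftVar v}.Finite :=
    (List.finite_length_lt (Option (Fin k)) n).subset fun v hv => hv.1
  let extendVar (f : Fin e → VWord k) (i : ℕ) : VWord k := if h : i < e then f ⟨i, h⟩ else [none]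
  refine ⟨(Fintype.piFinset fun _ => hfin.toFinset).image extendVar, ?_, fun w hw hlen => ?_⟩
  · simp only [mem_image, Fintype.mem_piFinset, hfin.mem_toFinset, forall_exists_index, and_imp]
    rintro _ f hf rfl i
    simp only [extendVar]
    split_ifs
    exacts [(hf _).2, rfl]
  · refine ⟨extendVar fun i => w i, mem_image_of_mem _ ?_, fun i hi => dif_pos hi⟩
    exact Fintype.mem_piFinset.2 fun i => hfin.mem_toFinset.2 ⟨hlen i i.2, hw i⟩

theorem one_le_mul_wordAvg_ind [NeZero k] {A : Set (Word k)} {x : Word k} (hx : x ∈ A)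
    (hn : x.length < n) : 1 ≤ n * (k : ℝ) ^ n * wordAvg n (ind A) := by
  have hk : (1 : ℝ) ≤ k := by exact_mod_cast NeZero.one_le
  have hpoint := wordAvg_mul_ind_singleton (ind A) hn
  rw [ind_of_mem hx, Fintype.card_fin] at hpoint
  have hn0 : (0 : ℝ) < n := by exact_mod_cast Nat.zero_lt_of_lt hn
  calc (1 : ℝ) = n * (k : ℝ) ^ x.length * (1 / (n * (k : ℝ) ^ x.length)) := by field_simp
    _ ≤ n * (k : ℝ) ^ n * wordAvg n (ind A) := by
      gcongr
      rw [← hpoint]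
      exact wordAvg_mono fun l _ => mul_le_of_le_one_right (ind_nonneg l) (ind_le_one l)

theorem exists_treeRoots_nonempty {Λ : Finset (ℕ → VWord k)} {B : Set (Word k)} [NeZero k]
    (hΛ : ∀ w : ℕ → VWord k, (∀ i, IsLeftVar (w i)) → (∀ i < e, (w i).length < n) →
      ∃ w' ∈ Λ, ∀ i < e, w' i = w i)
    (hB : HasCSTree (e + 1) (B ∩ {l | l.length < n})) :
    ∃ w ∈ Λ, ∃ x ∈ treeRoots w (e + 1) B, x.length < n := by
  obtain ⟨Φ, ⟨c, w, hw, hΦ⟩, htree⟩ := hB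
  have hmem (l : Word k) (hl : l.length < e + 1) : c ++ substSeq w l ∈ B ∩ {l | l.length < n} :=
    hΦ l ▸ htree l hl
  have hlen (i : ℕ) (hi : i < e) : (w i).length < n := by
    have hlast := (hmem (List.replicate (i + 1) 0) (by simpa using hi)).2
    rw [Set.mem_ofPred_eq, List.length_append, length_substSeq, List.length_replicate,
      sum_range_succ] at hlast
    lia
  obtain ⟨w', hw', heq⟩ := hΛ w hw hlen
  refine ⟨w', hw', c, ?_, ?_⟩
  · rw [treeRoots_congr heq]
    exact fun l hl => (hmem l hl).1
  · simpa [substSeq_nil] using (hmem [] (by simp)).2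

theorem exists_wordAvg_le_add_sum_treeRoots [NeZero k] [NeZero n] {δ : ℝ} (hδ : 0 ≤ δ)
    (hn : ∀ B : Set (Word k), δ ≤ wordAvg n (ind B) → HasCSTree (e + 1) B) :
    ∃ C > 0, ∃ Λ : Finset (ℕ → VWord k), (∀ w ∈ Λ, ∀ i, IsLeftVar (w i)) ∧ ∀ B,
      wordAvg n (ind B) ≤ δ + C * ∑ w ∈ Λ, wordAvg n (ind (treeRoots w (e + 1) B)) := by
  obtain ⟨Λ, hvar, hΛ⟩ := exists_finset_isLeftVar k e n
  have hk : (0 : ℝ) < k := by exact_mod_cast NeZero.pos k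
  have hn0 : (0 : ℝ) < n := by exact_mod_cast NeZero.pos n
  refine ⟨n * (k : ℝ) ^ n, by positivity, Λ, hvar, fun B => ?_⟩
  have hnonneg (w : ℕ → VWord k) : 0 ≤ wordAvg n (ind (treeRoots w (e + 1) B)) :=
    wordAvg_nonneg ind_nonneg
  obtain hB | hB := le_or_gt δ (wordAvg n (ind B))
  · obtain ⟨w, hw, x, hx, hxn⟩ := exists_treeRoots_nonempty hΛ (hasCSTree_inter_of_le_wordAvg hn hB)
    calc wordAvg n (ind B) ≤ 1 := wordAvg_le_one ind_le_one
      _ ≤ n * (k : ℝ) ^ n * wordAvg n (ind (treeRoots w (e + 1) B)) :=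
          one_le_mul_wordAvg_ind hx hxn
      _ ≤ n * (k : ℝ) ^ n * ∑ w ∈ Λ, wordAvg n (ind (treeRoots w (e + 1) B)) := by
          gcongr
          exact single_le_sum (fun w _ => hnonneg w) hw
      _ ≤ _ := le_add_of_nonneg_left hδ
  · exact hB.le.trans (le_add_of_nonneg_right
      (mul_nonneg (by positivity) (sum_nonneg fun w _ => hnonneg w)))

theorem wordAvg_mul_ind_le_add_sum_treeRoots {m : ℕ} [NeZero k] [NeZero m] [NeZero n] {δ C : ℝ}
    {Λ : Finset (ℕ → VWord k)} (hle : ∀ B : Set (Word k),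
      wordAvg n (ind B) ≤ δ + C * ∑ w ∈ Λ, wordAvg n (ind (treeRoots w e B))) (A : Set (Word k)) :
    wordAvg (m * n) (ind A) ≤ δ + C * ∑ w ∈ Λ, wordAvg (m * n) (ind (treeRoots w e A)) := by
  have hsplit (n : ℕ) [NeZero n] (f : (ℕ → VWord k) → Word k → ℝ) :
      wordAvg n (fun l => δ + C * ∑ w ∈ Λ, f w l) = δ + C * ∑ w ∈ Λ, wordAvg n (f w) := by
    rw [wordAvg_add, wordAvg_const, wordAvg_const_mul, wordAvg_sum]
  rw [← hsplit (m * n)]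
  refine wordAvg_mul_mono fun x => ?_
  rw [hsplit n fun w l => ind (treeRoots w e A) (x ++ l)]
  have hx := hle ((x ++ ·) ⁻¹' A)
  simp only [treeRoots_preimage_append] at hx
  exact hx

theorem forcesTree_add_two [NeZero k] (htwo : ∀ δ > 0, ForcesTree k 2 δ)
    (hdepth : ∀ δ > 0, ForcesTree k (e + 1) δ) {δ : ℝ} (hδ : 0 < δ) : ForcesTree k (e + 2) δ := by
  obtain ⟨n, hn0, hn⟩ := hdepth (δ / 2) (half_pos hδ)
  have : NeZero n := ⟨hn0.ne'⟩
  obtain ⟨C, hC, Λ, hΛ, hle⟩ := exists_wordAvg_le_add_sum_treeRoots (half_pos hδ).le hn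
  obtain ⟨m, hm0, hm⟩ := htwo (δ / (4 * C * (#Λ + 1))) (by positivity)
  have : NeZero m := ⟨hm0.ne'⟩
  refine ⟨m * n, by positivity, fun A hA => ?_⟩
  by_contra hfree
  have hroots (w) (hw : w ∈ Λ) :
      wordAvg (m * n) (ind (treeRoots w (e + 1) A)) ≤ δ / (4 * C * (#Λ + 1)) := by
    rw [mul_comm]
    exact wordAvg_mul_le <| wordAvg_ind_comp_le_of_not_hasCSTree hm fun h =>
      hfree (hasCSTree_of_hasCSTree_two_treeRoots (hΛ w hw) e.succ_pos h)
  have hupper := wordAvg_mul_ind_le_add_sum_treeRoots (m := m) hle A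
  have hsmall : C * ∑ w ∈ Λ, wordAvg (m * n) (ind (treeRoots w (e + 1) A)) < δ / 2 := by
    calc C * ∑ w ∈ Λ, wordAvg (m * n) (ind (treeRoots w (e + 1) A))
        ≤ C * (#Λ * (δ / (4 * C * (#Λ + 1)))) := by
          gcongr
          exact (sum_le_card_nsmul _ _ _ hroots).trans_eq (nsmul_eq_mul _ _)
      _ < δ / 2 := by
          rw [mul_div_assoc', mul_div_assoc', div_lt_div_iff₀ (by positivity) two_pos]
          nlinarith [mul_pos hC hδ]
  linarith

end Depth

section AllDepths

variable {k : ℕ}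

theorem HasCSTree.of_le {d e : ℕ} {A : Set (Word k)} (h : HasCSTree d A) (hed : e ≤ d) :
    HasCSTree e A :=
  let ⟨Φ, hΦ, h⟩ := h
  ⟨Φ, hΦ, fun x hx => h x (hx.trans_le hed)⟩

theorem ForcesTree.of_le {d e : ℕ} {δ : ℝ} (h : ForcesTree k d δ) (hed : e ≤ d) :
    ForcesTree k e δ :=
  let ⟨n, hn, h⟩ := h
  ⟨n, hn, fun A hA => (h A hA).of_le hed⟩

theorem forcesTree_of_forall_forcesTree_two [NeZero k] (htwo : ∀ δ > 0, ForcesTree k 2 δ) (d : ℕ) :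
    ∀ δ > 0, ForcesTree k d δ := by
  have hsucc (e : ℕ) : ∀ δ > 0, ForcesTree k (e + 1) δ := by
    induction e with
    | zero => exact fun δ hδ => (htwo δ hδ).of_le one_le_two
    | succ e ih => exact fun δ hδ => forcesTree_add_two htwo ih hδ
  exact fun δ hδ => (hsucc d δ hδ).of_le d.le_succ

theorem hasCSTree_two_of_length_lt {A : Set (Word 1)} {x y : Word 1} (hx : x ∈ A) (hy : y ∈ A)
    (hlt : x.length < y.length) : HasCSTree 2 A := by
  refine hasCSTree_two_iff.2 ⟨x, List.replicate (y.length - x.length - 1) none, hx, fun a => ?_⟩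
  convert hy
  refine List.ext_getElem ?_ fun _ _ _ => Subsingleton.elim _ _
  rw [List.length_append, List.length_cons, length_subst, List.length_replicate]
  lia

theorem forcesTree_one_two {δ : ℝ} (hδ : 0 < δ) : ForcesTree 1 2 δ := by
  obtain ⟨n, hn⟩ := exists_nat_gt (1 / δ)
  have hn0 : (0 : ℝ) < n := (one_div_pos.2 hδ).trans hn
  refine ⟨n, by exact_mod_cast hn0, fun A hA => ?_⟩
  by_contra hfree
  obtain ⟨x, hxn, hx⟩ : ∃ x : Word 1, x.length < n ∧ x ∈ A := by
    by_contra! hempty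
    have hzero : wordAvg n (ind A) = wordAvg n fun l => 0 * ind A l :=
      wordAvg_congr fun l hl => by rw [ind_of_notMem (hempty l hl), zero_mul]
    rw [hzero, wordAvg_const_mul, zero_mul] at hA
    exact hA.not_gt hδ
  have hsub (y : Word 1) (hy : y ∈ A) : y = x := by
    refine List.ext_getElem (le_antisymm ?_ ?_) fun _ _ _ => Subsingleton.elim _ _
    · exact le_of_not_gt fun h => hfree (hasCSTree_two_of_length_lt hx hy h)
    · exact le_of_not_gt fun h => hfree (hasCSTree_two_of_length_lt hy hx h)
  have hind (y : Word 1) : ind A y = ind A y * ind {x} y := by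
    by_cases hy : y ∈ A
    · rw [ind_of_mem (A := {x}) (hsub y hy), mul_one]
    · rw [ind_of_notMem hy, zero_mul]
  have havg := wordAvg_mul_ind_singleton (ind A) hxn
  rw [wordAvg_congr fun y _ => (hind y).symm, ind_of_mem hx] at havg
  rw [havg, Fintype.card_fin, Nat.cast_one, one_pow, mul_one] at hA
  exact ((one_div_lt hδ hn0).1 hn).not_ge hA

theorem forcesTree_succ (k d : ℕ) : ∀ δ > 0, ForcesTree (k + 1) d δ := by
  induction k generalizing d with
  | zero => exact forcesTree_of_forall_forcesTree_two (fun _ => forcesTree_one_two) d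
  | succ k ih =>
    exact forcesTree_of_forall_forcesTree_two (fun _ => forcesTree_succ_two ih) d

end AllDepths

section Finite

variable {k : ℕ} {A : Set (Word k)}

theorem hasCSTree_of_forall_le_levelAvg [NeZero k] {d n : ℕ} [NeZero n] {δ : ℝ}
    (hn : ∀ B : Set (Word k), δ ≤ wordAvg n (ind B) → HasCSTree d B) {L : Finset ℕ} (hL : n ≤ #L)
    (hA : ∀ t ∈ L, δ ≤ levelAvg t (ind A)) : HasCSTree d A := by
  obtain ⟨L', hL', hcard⟩ := exists_subset_card_eq hL
  let σ (i : Fin n) : Fin (L'.sup id + 1) := ⟨L'.orderEmbOfFin hcard i,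
    Nat.lt_succ_of_le (le_sup (f := id) (L'.orderEmbOfFin_mem hcard i))⟩
  have hσ : StrictMono σ := fun i j hij => (L'.orderEmbOfFin hcard).strictMono hij
  have hδ : δ ≤ 𝔼 q, levelAvg (σ q) (ind A) :=
    le_expect univ_nonempty fun q _ => hA _ (hL' (L'.orderEmbOfFin_mem hcard q))
  rw [expect_levelAvg_apply hσ] at hδ
  obtain ⟨y, -, hy⟩ := exists_le_of_le_expect univ_nonempty hδ
  exact (hn _ hy).of_preimage (isCSMap_positionMap σ y)

theorem csWord_eq_append_substSeq (c : Word k) (w : ℕ → VWord k) (n : ℕ) (a : ℕ → Fin k) :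
    csWord c w n a = c ++ substSeq w ((List.range (n + 1)).map a) := by
  rw [csWord, substSeq]
  congr 2
  exact List.ext_getElem (by simp) fun i _ _ => by simp

theorem HasCSTree.exists_csSet_subset {m : ℕ} (h : HasCSTree (m + 1) A) :
    ∃ c w, (∀ n, IsLeftVar (w n)) ∧ csSet c m w ⊆ A := by
  obtain ⟨Φ, ⟨c, w, hw, hΦ⟩, hA⟩ := h
  simp only [hΦ] at hA
  refine ⟨c, w, hw, ?_⟩
  rintro x (rfl | ⟨n, hn, a, rfl⟩)
  · simpa [substSeq_nil] using hA [] (by simp)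
  · rw [csWord_eq_append_substSeq]
    exact hA _ (by simpa using hn)

end Finite

end CarlsonSimpson

open CarlsonSimpson

/-- **Theorem B** (finite density Carlson–Simpson theorem). -/
theorem finite_density_carlson_simpson (k m : ℕ) (hk : 2 ≤ k) (hm : 1 ≤ m)
    (δ : ℝ) (hδ0 : 0 < δ) (hδ1 : δ ≤ 1) :
    ∃ N : ℕ, ∀ L : Finset ℕ, N ≤ L.card → ∀ A : Set (Word k),
      (∀ n ∈ L, δ * (k : ℝ) ^ n ≤ (Set.ncard {x ∈ A | x.length = n} : ℝ)) →
      ∃ (c : Word k) (w : ℕ → VWord k),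
        (∀ n < m, IsLeftVar (w n)) ∧ csSet c m w ⊆ A := by
  obtain ⟨k, rfl⟩ : ∃ k', k = k' + 1 := Nat.exists_eq_add_one.2 (two_pos.trans_le hk)
  obtain ⟨N, hN0, hN⟩ := forcesTree_succ k (m + 1) δ hδ0
  have : NeZero N := ⟨hN0.ne'⟩
  refine ⟨N, fun L hL A hA => ?_⟩
  have hdense (n : ℕ) (hn : n ∈ L) : δ ≤ levelAvg n (ind A) := by
    rw [levelAvg_ind, Fintype.card_fin]
    exact (le_div_iff₀ (by positivity)).2 (hA n hn)
  obtain ⟨c, w, hw, hsub⟩ := (hasCSTree_of_forall_le_levelAvg hN hL hdense).exists_csSet_subset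
  exact ⟨c, w, fun n _ => hw n, hsub⟩
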